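/- Let ρ(y) = Ai'(y)² − y·Ai(y)². Then ρ(x) > 0 for every x ∈ ℝ, and for x ∈ ℝ one may define the reduced Palm one-point correlation ρ_x(y) = ρ(y) − K_Ai(x,y)²/ρ(x). For s > 0 put u_s(x) = ∫_{−s}^{s} ρ_x(y)/(x − y) dy − ∫_{−s}^{s} ρ̂(y)/(−y) dy (the first integrand, defined for y ≠ x, is Lebesgue integrable on (−s,s), as is the second). Then there is a continuous function u : ℝ → ℝ such that u_s → u as s → ∞ uniformly on every compact subset of ℝ. -/

import Mathlib

open MeasureTheory Filter Set

noncomputable section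

/-- The Airy function `Ai(x) = (1/π)·lim_{b→∞} ∫_0^b cos(t³/3 + x·t) dt`. -/
def Ai (x : ℝ) : ℝ :=
  (1 / Real.pi) *
    limUnder Filter.atTop (fun b : ℝ => ∫ t in (0:ℝ)..b, Real.cos (t ^ 3 / 3 + x * t))

/-- The Airy kernel. -/
def KAi (x y : ℝ) : ℝ :=
  if x = y then (deriv Ai x) ^ 2 - x * (Ai x) ^ 2
  else (Ai x * deriv Ai y - deriv Ai x * Ai y) / (x - y)

/-- One-point correlation function of the Airy₂ random point field. -/
def rho (x : ℝ) : ℝ := (deriv Ai x) ^ 2 - x * (Ai x) ^ 2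

/-- Probabilists' Hermite polynomial `Ĥ_m(x) = (−1)^m e^{x²/2} (d/dx)^m e^{−x²/2}`. -/
def hermiteP (m : ℕ) (x : ℝ) : ℝ :=
  (-1 : ℝ) ^ m * Real.exp (x ^ 2 / 2) * iteratedDeriv m (fun t => Real.exp (-t ^ 2 / 2)) x

/-- Normalized oscillator function `φ_m`. -/
def osc (m : ℕ) (x : ℝ) : ℝ :=
  (2 * Real.pi) ^ (-(1:ℝ)/4) * ((m.factorial : ℝ)) ^ (-(1:ℝ)/2) *
    Real.exp (-x ^ 2 / 4) * hermiteP m x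

/-- `ψ_mⁿ(x) = n^{1/12}·φ_m(2√n + n^{−1/6}·x)`. -/
def psiUp (n m : ℕ) (x : ℝ) : ℝ :=
  (n : ℝ) ^ ((1:ℝ)/12) * osc m (2 * Real.sqrt n + (n : ℝ) ^ (-(1:ℝ)/6) * x)

/-- `ψ_n = ψ_nⁿ`. -/
def psiN (n : ℕ) : ℝ → ℝ := psiUp n n

/-- The finite-`n` Airy kernel. -/
def KAiN (n : ℕ) (x y : ℝ) : ℝ :=
  if x = y then
    (deriv (psiN n) x) ^ 2 - psiN n x * deriv (deriv (psiN n)) x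
      - (1 / (2 * (n : ℝ) ^ ((1:ℝ)/3))) * (psiN n x) ^ 2
  else
    (psiN n x * deriv (psiN n) y - deriv (psiN n) x * psiN n y) / (x - y)
      - (1 / (2 * (n : ℝ) ^ ((1:ℝ)/3))) * (psiN n x * psiN n y)

/-- `(εf)(x) = (1/2)·∫_ℝ sign(x − y)·f(y) dy`. -/
def epsF (f : ℝ → ℝ) (x : ℝ) : ℝ := (1/2) * ∫ y : ℝ, Real.sign (x - y) * f y

/-- `εψ_n`. -/
def epsPsi (n : ℕ) : ℝ → ℝ := epsF (psiN n)

/-- `J₁(x,y) = K_Ai(x,y) + (1/2)·Ai(x)·(1 − ∫_y^∞ Ai(u) du)`. -/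
def J1 (x y : ℝ) : ℝ := KAi x y + (1/2) * Ai x * (1 - ∫ u in Set.Ioi y, Ai u)

/-- Scalar part of the quaternion product of Airy₁ kernels. -/
def L1 (x y : ℝ) : ℝ :=
  J1 x y * J1 y x -
    deriv (fun v => J1 x v) y * ((∫ u in x..y, J1 u x) - (1/2) * Real.sign (y - x))

/-- `J₁ⁿ(x,y) = K_Aiⁿ(x,y) + (1/2)·ψ_{n−1}ⁿ(x)·(εψ_n)(y)`. -/
def J1N (n : ℕ) (x y : ℝ) : ℝ :=
  KAiN n x y + (1/2) * psiUp n (n - 1) x * epsPsi n y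

/-- Scalar part of the quaternion product of finite-`n` Airy₁ kernels. -/
def L1N (n : ℕ) (x y : ℝ) : ℝ :=
  J1N n x y * J1N n y x -
    deriv (fun v => J1N n x v) y * ((∫ u in x..y, J1N n u x) - (1/2) * Real.sign (y - x))

/-- `ρ̂(x) = (1/π)·√(−x)` for `x < 0`, and `0` otherwise. -/
def rhoHat (x : ℝ) : ℝ := if x < 0 then Real.sqrt (-x) / Real.pi else 0

/-- `ρ̂ⁿ(x) = (1/π)·√(−x·(1 + x/(4·n^{2/3})))` on `(−4n^{2/3}, 0)`, and `0` otherwise. -/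
def rhoHatN (n : ℕ) (x : ℝ) : ℝ :=
  if -(4 * (n : ℝ) ^ ((2:ℝ)/3)) < x ∧ x < 0 then
    Real.sqrt (-x * (1 + x / (4 * (n : ℝ) ^ ((2:ℝ)/3)))) / Real.pi
  else 0

/-- `G_{a,b,c}(x,y) = |x|^{−a}·|y|^{−b}·|x−y|^{−c}`. -/
def Gf (a b c : ℝ) (x y : ℝ) : ℝ := |x| ^ (-a) * |y| ^ (-b) * |x - y| ^ (-c)

/-- `Ĝ_{a,b,c}(x,y) = G_{a,b,c}(x,y) + G_{a,b,c}(y,x)`. -/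
def Ghat (a b c : ℝ) (x y : ℝ) : ℝ := Gf a b c x y + Gf a b c y x

/-- Soft-edge one-point correlation function of the `n`-point GUE ensemble. -/
def rhoN (n : ℕ) (x : ℝ) : ℝ :=
  (deriv (psiN n) x) ^ 2 - (x ^ 2 / (4 * (n : ℝ) ^ ((2:ℝ)/3)) + x) * (psiN n x) ^ 2

end

/-!
The density `ρ` is the energy `Ai'² - x Ai²` of the Airy equation. Since `ρ' = -Ai²` and `ρ → 0` at
`+∞`, it is positive. On the negative axis put `x = -τ²`: once the oscillating term `Ai Ai' / (2τ³)`
is removed, `ρ / τ` has logarithmic derivative `O(τ⁻⁴)`, so `ρ(x) = C √(-x) + O(1/x)`.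
The constant is found from the Laplace transform: the Fourier representation of `Ai` along
`Im z = c / 2` and Plancherel give `∫ e^{cx} Ai² = e^{c³/12} / √(4πc)`, whose behaviour as `c → 0`
forces `C = 1 / π`, that is, `ρ - ρ̂ = O(1/x)`.

The Palm integrand has a removable singularity at `y = x`, by Taylor expansion. For large `|y|`,
after subtraction of `ρ̂(y) / (-y)` there remain `(ρ - ρ̂)(y) / (x - y)`, `ρ̂(y) x / ((x - y) y)`
and `K_Ai(x, y)² / (ρ(x) (x - y))`, all `O(|y|^{-3/2})` uniformly for `x` in a compact set. Hence
`u_s` converges uniformly on compact sets to the integral over the whole line.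
-/

section RealAnalysis

open Asymptotics
open scoped Topology FourierTransform

/-- A differential form of Grönwall's inequality: `|q'| ≤ -κ' q` makes `q e^κ` antitone and
`q e^{-κ}` monotone. -/
lemma mul_exp_neg_le_mul_exp_of_abs_deriv_le {s : Set ℝ} (hs : Convex ℝ s) {q q' κ κ' : ℝ → ℝ}
    (hq : ∀ t ∈ s, HasDerivAt q (q' t) t) (hκ : ∀ t ∈ s, HasDerivAt κ (κ' t) t)
    (hκ_nonneg : ∀ t ∈ s, 0 ≤ κ t) (hq_nonneg : ∀ t ∈ s, 0 ≤ q t)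
    (h : ∀ t ∈ s, |q' t| ≤ -κ' t * q t) {σ τ : ℝ} (hσ : σ ∈ s) (hτ : τ ∈ s) :
    q σ * Real.exp (-κ σ) ≤ q τ * Real.exp (κ τ) := by
  have hsub := interior_subset (s := s)
  have hmul (ε : ℝ) (t : ℝ) (ht : t ∈ s) : HasDerivAt (fun t => q t * Real.exp (ε * κ t))
      ((q' t + ε * κ' t * q t) * Real.exp (ε * κ t)) t :=
    ((hq t ht).mul ((hκ t ht).const_mul ε).exp).congr_deriv (by ring)
  have hcont (ε : ℝ) : ContinuousOn (fun t => q t * Real.exp (ε * κ t)) s :=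
    fun t ht => (hmul ε t ht).continuousAt.continuousWithinAt
  have hanti : AntitoneOn (fun t => q t * Real.exp (1 * κ t)) s :=
    antitoneOn_of_hasDerivWithinAt_nonpos hs (hcont 1)
      (fun t ht => (hmul 1 t (hsub ht)).hasDerivWithinAt) fun t ht =>
        mul_nonpos_of_nonpos_of_nonneg (by linarith [le_abs_self (q' t), h t (hsub ht)])
          (Real.exp_pos _).le
  have hmono : MonotoneOn (fun t => q t * Real.exp (-1 * κ t)) s :=
    monotoneOn_of_hasDerivWithinAt_nonneg hs (hcont (-1))
      (fun t ht => (hmul (-1) t (hsub ht)).hasDerivWithinAt) fun t ht =>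
        mul_nonneg (by linarith [neg_abs_le (q' t), h t (hsub ht)]) (Real.exp_pos _).le
  have hexp (t : ℝ) (ht : t ∈ s) : q t * Real.exp (-κ t) ≤ q t * Real.exp (κ t) := by
    gcongr
    · exact hq_nonneg t ht
    · linarith [hκ_nonneg t ht]
  rcases le_total σ τ with hστ | hτσ
  · simpa using (hmono hσ hτ hστ).trans (by simpa using hexp τ hτ)
  · simpa using (hexp σ hσ).trans (by simpa using hanti hτ hσ hτσ)

lemma exists_forall_mul_exp_neg_le_and_le_mul_exp {s : Set ℝ} (hs : Convex ℝ s) (hne : s.Nonempty)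
    {q q' κ κ' : ℝ → ℝ} (hq : ∀ t ∈ s, HasDerivAt q (q' t) t)
    (hκ : ∀ t ∈ s, HasDerivAt κ (κ' t) t) (hκ_nonneg : ∀ t ∈ s, 0 ≤ κ t)
    (hq_nonneg : ∀ t ∈ s, 0 ≤ q t) (h : ∀ t ∈ s, |q' t| ≤ -κ' t * q t) :
    ∃ C, ∀ t ∈ s, C * Real.exp (-κ t) ≤ q t ∧ q t ≤ C * Real.exp (κ t) := by
  obtain ⟨C, hlower, hupper⟩ := exists_between_of_forall_le
    (hne.image fun t => q t * Real.exp (-κ t)) (hne.image fun t => q t * Real.exp (κ t)) (by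
      rintro _ ⟨σ, hσ, rfl⟩ _ ⟨τ, hτ, rfl⟩
      exact mul_exp_neg_le_mul_exp_of_abs_deriv_le hs hq hκ hκ_nonneg hq_nonneg h hσ hτ)
  refine ⟨C, fun t ht => ⟨?_, ?_⟩⟩
  · rw [Real.exp_neg, mul_inv_le_iff₀ (Real.exp_pos _)]
    exact hupper (mem_image_of_mem _ ht)
  · rw [← mul_inv_le_iff₀ (Real.exp_pos _), ← Real.exp_neg]
    exact hlower (mem_image_of_mem _ ht)

lemma integral_exp_neg_mul_abs {c : ℝ} (hc : 0 < c) :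
    ∫ x : ℝ, Real.exp (-c * |x|) = 2 / c := by
  rw [integral_comp_abs (f := fun x => Real.exp (-c * x)), integral_exp_mul_Ioi (by linarith)]
  simp [div_eq_mul_inv]

lemma integrable_exp_neg_mul_abs {c : ℝ} (hc : 0 < c) :
    Integrable fun x : ℝ => Real.exp (-c * |x|) :=
  .of_integral_ne_zero (by rw [integral_exp_neg_mul_abs hc]; positivity)

lemma isBigO_sqrt_neg_of_sq {f : ℝ → ℝ} (hf : (fun x => f x ^ 2) =O[atBot] fun x => √(-x)) :
    f =O[atBot] fun x => √(-x) := by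
  have hone : (1 : ℝ → ℝ) =O[atBot] fun x => √(-x) := by
    refine .of_norm_eventuallyLE ?_
    filter_upwards [eventually_le_atBot (-1)] with x hx
    simpa using Real.one_le_sqrt.2 (by linarith : 1 ≤ -x)
  refine IsBigO.trans (.of_norm_le fun x => ?_) (hf.add hone)
  rw [Real.norm_eq_abs, Pi.one_apply]
  nlinarith [sq_nonneg (|f x| - 1), sq_abs (f x)]

lemma integrable_exp_mul_mul_of_isBigO {g : ℝ → ℝ} {c p : ℝ} (hc : c ∈ Ioo 0 1)
    (hg : Continuous g) (hbot : g =O[atBot] fun x => (-x) ^ p)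
    (htop : g =O[atTop] fun x => Real.exp (-x)) :
    Integrable fun x => Real.exp (c * x) * g x := by
  have hdecay {b : ℝ} (hb : 0 < b) : IntegrableAtFilter (fun x : ℝ => Real.exp (-b * x)) atTop :=
    ⟨Ioi 0, Ioi_mem_atTop 0, exp_neg_integrableOn_Ioi 0 hb⟩
  have hgrowth {b : ℝ} (hb : 0 < b) : IntegrableAtFilter (fun x : ℝ => Real.exp (b * x)) atBot :=
    ⟨Iic 0, Iic_mem_atBot 0, integrableOn_exp_mul_Iic hb 0⟩
  have hpow : (fun x : ℝ => (-x) ^ p) =O[atBot] fun x => Real.exp (-(c / 2) * x) := by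
    simpa [Function.comp_def] using ((isLittleO_rpow_exp_pos_mul_atTop p
      (half_pos hc.1)).comp_tendsto tendsto_neg_atBot_atTop).isBigO
  refine LocallyIntegrable.integrable_of_isBigO_atBot_atTop
    (Continuous.locallyIntegrable (by fun_prop)) ?_ (hgrowth (half_pos hc.1)) ?_
    (hdecay (sub_pos.2 hc.2))
  · refine ((isBigO_refl (fun x => Real.exp (c * x)) atBot).mul (hbot.trans hpow)).congr_right
      fun x => ?_
    rw [← Real.exp_add]
    ring_nf
  · refine ((isBigO_refl (fun x => Real.exp (c * x)) atTop).mul htop).congr_right fun x => ?_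
    rw [← Real.exp_add]
    ring_nf

lemma exists_abs_integral_exp_mul_mul_le {h : ℝ → ℝ} (hh : Continuous h)
    (hbot : h =O[atBot] (1 : ℝ → ℝ)) (htop : h =O[atTop] fun x => Real.exp (-x)) :
    ∃ M, ∀ c ∈ Ioc (0 : ℝ) (1 / 2), |∫ x, Real.exp (c * x) * h x| ≤ M / c := by
  obtain ⟨M, hM⟩ : ∃ M, ∀ x, ‖h x * Real.exp (max x 0)‖ ≤ M := by
    have hbdd := (Continuous.isBounded_range_iff_isBigO_atTop_atBot
      (f := fun x => h x * Real.exp (max x 0)) (by fun_prop)).2 ⟨?_, ?_⟩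
    · obtain ⟨M, hM⟩ := isBounded_iff_forall_norm_le.1 hbdd
      exact ⟨M, fun x => hM _ (mem_range_self x)⟩
    · refine (htop.mul (isBigO_refl _ _)).congr' .rfl ?_
      filter_upwards [eventually_ge_atTop 0] with x hx
      simp [max_eq_left hx, ← Real.exp_add]
    · refine hbot.congr' ?_ .rfl
      filter_upwards [eventually_le_atBot 0] with x hx
      simp [max_eq_right hx]
  have hM_nonneg : 0 ≤ M := (norm_nonneg _).trans (hM 0)
  refine ⟨2 * M, fun c hc => ?_⟩
  have hle (x : ℝ) : ‖Real.exp (c * x) * h x‖ ≤ M * Real.exp (-c * |x|) := by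
    have hexp : c * x - max x 0 ≤ -c * |x| := by
      rcases le_total x 0 with hx | hx
      · rw [max_eq_right hx, abs_of_nonpos hx]; linarith
      · rw [max_eq_left hx, abs_of_nonneg hx]; nlinarith [hc.2]
    calc ‖Real.exp (c * x) * h x‖
        = ‖h x * Real.exp (max x 0)‖ * Real.exp (c * x - max x 0) := by
          rw [norm_mul, norm_mul, Real.norm_eq_abs (Real.exp _), Real.norm_eq_abs (Real.exp _),
            Real.abs_exp, Real.abs_exp, mul_assoc, ← Real.exp_add, mul_comm]
          ring_nf
      _ ≤ M * Real.exp (-c * |x|) := by gcongr; exact hM x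
  calc |∫ x, Real.exp (c * x) * h x| ≤ ∫ x, M * Real.exp (-c * |x|) :=
        norm_integral_le_of_norm_le ((integrable_exp_neg_mul_abs hc.1).const_mul M)
          (.of_forall hle)
    _ = 2 * M / c := by rw [integral_const_mul, integral_exp_neg_mul_abs hc.1]; ring

lemma integral_exp_mul_mul_max_neg_zero_rpow {c p : ℝ} (hc : 0 < c) (hp : 0 < p) :
    ∫ x : ℝ, Real.exp (c * x) * (max (-x) 0) ^ p = Real.Gamma (p + 1) / c ^ (p + 1) := by
  have hsupp : Function.support (fun x : ℝ => Real.exp (-(c * x)) * (max x 0) ^ p) ⊆ Ioi 0 := by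
    intro x hx
    by_contra hx'
    exact hx (by simp [max_eq_right (notMem_Ioi.1 hx'), Real.zero_rpow hp.ne'])
  calc ∫ x : ℝ, Real.exp (c * x) * (max (-x) 0) ^ p
      = ∫ x : ℝ, Real.exp (-(c * x)) * (max x 0) ^ p := by
        rw [← integral_neg_eq_self]; simp
    _ = ∫ x in Ioi (0 : ℝ), Real.exp (-(c * x)) * (max x 0) ^ p :=
        (setIntegral_eq_integral_of_forall_compl_eq_zero fun x hx =>
          Function.notMem_support.1 fun hx' => hx (hsupp hx')).symm
    _ = ∫ x in Ioi (0 : ℝ), x ^ (p + 1 - 1) * Real.exp (-(c * x)) :=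
        setIntegral_congr_fun measurableSet_Ioi fun x hx => by
          simp only [max_eq_left (mem_Ioi.1 hx).le, add_sub_cancel_right, mul_comm]
    _ = Real.Gamma (p + 1) / c ^ (p + 1) := by
        rw [Real.integral_rpow_mul_exp_neg_mul_Ioi (by linarith) hc, one_div,
          Real.inv_rpow hc.le, div_eq_inv_mul]

lemma tendsto_rpow_mul_integral_exp_mul_mul_zero {h : ℝ → ℝ} {p : ℝ} (hp : 0 < p)
    (hh : Continuous h) (hbot : h =O[atBot] (1 : ℝ → ℝ))
    (htop : h =O[atTop] fun x => Real.exp (-x)) :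
    Tendsto (fun c => c ^ (p + 1) * ∫ x, Real.exp (c * x) * h x) (𝓝[>] 0) (𝓝 0) := by
  obtain ⟨M, hM⟩ := exists_abs_integral_exp_mul_mul_le hh hbot htop
  have hpow : Tendsto (fun c : ℝ => c ^ p * M) (𝓝[>] 0) (𝓝 0) := by
    have := ((Real.continuousAt_rpow_const 0 p (.inr hp.le)).tendsto.mul_const M)
    rw [Real.zero_rpow hp.ne', zero_mul] at this
    exact this.mono_left nhdsWithin_le_nhds
  refine squeeze_zero_norm' ?_ hpow
  filter_upwards [Ioc_mem_nhdsGT (half_pos one_pos)] with c hc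
  rw [norm_mul, Real.norm_of_nonneg (Real.rpow_nonneg hc.1.le _), Real.rpow_add_one hc.1.ne']
  calc c ^ p * c * ‖∫ x, Real.exp (c * x) * h x‖ ≤ c ^ p * c * (M / c) := by
        gcongr
        · exact mul_nonneg (Real.rpow_nonneg hc.1.le _) hc.1.le
        · exact hM c hc
    _ = c ^ p * M := by have := hc.1.ne'; field_simp

lemma tendsto_rpow_mul_integral_exp_mul_mul {g : ℝ → ℝ} {C p : ℝ} (hp : 0 < p)
    (hg : Continuous g) (hbot : (fun x => g x - C * (max (-x) 0) ^ p) =O[atBot] (1 : ℝ → ℝ))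
    (htop : g =O[atTop] fun x => Real.exp (-x)) :
    Tendsto (fun c => c ^ (p + 1) * ∫ x, Real.exp (c * x) * g x) (𝓝[>] 0)
      (𝓝 (C * Real.Gamma (p + 1))) := by
  have hmax_cont : Continuous fun x : ℝ => (max (-x) 0) ^ p :=
    (by fun_prop : Continuous fun x : ℝ => max (-x) 0).rpow_const fun _ => .inr hp.le
  have hmax_top : (fun x : ℝ => (max (-x) 0) ^ p) =ᶠ[atTop] 0 := by
    filter_upwards [eventually_ge_atTop 0] with x hx
    simp [max_eq_right (neg_nonpos.2 hx), Real.zero_rpow hp.ne']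
  have hmax_bot : (fun x : ℝ => (max (-x) 0) ^ p) =O[atBot] fun x => (-x) ^ p := by
    refine EventuallyEq.isBigO ?_
    filter_upwards [eventually_le_atBot 0] with x hx
    rw [max_eq_left (neg_nonneg.2 hx)]
  set h : ℝ → ℝ := fun x => g x - C * (max (-x) 0) ^ p
  have hh_cont : Continuous h := by fun_prop
  have hh_top : h =O[atTop] fun x => Real.exp (-x) := by
    refine htop.congr' ?_ .rfl
    filter_upwards [hmax_top] with x hx
    simp [h, hx]
  have hdiff : ∀ c ∈ Ioc (0 : ℝ) (1 / 2),
      c ^ (p + 1) * ∫ x, Real.exp (c * x) * g x =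
        C * Real.Gamma (p + 1) + c ^ (p + 1) * ∫ x, Real.exp (c * x) * h x := by
    intro c hc
    have hc' : c ∈ Ioo (0 : ℝ) 1 := ⟨hc.1, by linarith [hc.2]⟩
    have hmax_int := integrable_exp_mul_mul_of_isBigO hc' hmax_cont hmax_bot
      (hmax_top.trans_isBigO (isBigO_zero _ _))
    have hh_int := integrable_exp_mul_mul_of_isBigO (p := 0) hc' hh_cont
      (hbot.congr_right fun x => (Real.rpow_zero (-x)).symm) hh_top
    have hsplit : ∫ x, Real.exp (c * x) * g x =
        C * (∫ x, Real.exp (c * x) * (max (-x) 0) ^ p) + ∫ x, Real.exp (c * x) * h x := by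
      rw [← integral_const_mul, ← integral_add (hmax_int.const_mul C) hh_int]
      exact integral_congr_ae (.of_forall fun x => by simp only [h]; ring)
    have hcp : c ^ (p + 1) ≠ 0 := (Real.rpow_pos_of_pos hc.1 _).ne'
    rw [hsplit, integral_exp_mul_mul_max_neg_zero_rpow hc.1 hp]
    field_simp
  have hrem := tendsto_rpow_mul_integral_exp_mul_mul_zero hp hh_cont hbot hh_top
  refine Tendsto.congr' ?_ (by simpa using hrem.const_add (C * Real.Gamma (p + 1)))
  filter_upwards [Ioc_mem_nhdsGT (half_pos one_pos)] with c hc using (hdiff c hc).symm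

lemma integral_norm_sq_fourier_eq {f : ℝ → ℂ} (hc : Continuous f) (hi : Integrable f)
    (hF : Integrable (𝓕 f)) : ∫ v, ‖𝓕 f v‖ ^ 2 = ∫ t, ‖f t‖ ^ 2 := by
  have hflip := VectorFourier.integral_sesq_fourierIntegral_eq_neg_flip (μ := volume)
    (ν := volume) (innerSL ℂ (E := ℂ)) (L := innerₗ ℝ) Real.continuous_fourierChar
    continuous_inner hi hF
  have hsesq : ∫ v, (innerSL ℂ (𝓕 f v)) (𝓕 f v) = ∫ t, (innerSL ℂ (f t)) (𝓕⁻ (𝓕 f) t) := by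
    rwa [flip_innerₗ] at hflip
  rw [hc.fourierInv_fourier_eq hi hF] at hsesq
  apply Complex.ofRealLI.injective
  simpa [← LinearIsometry.integral_comp_comm, inner_self_eq_norm_sq_to_K] using hsesq

lemma tendstoUniformlyOn_setIntegral_of_norm_le {α X E ι : Type*} [MeasurableSpace α]
    {μ : Measure α} [NormedAddCommGroup E] [NormedSpace ℝ E] {l : Filter ι}
    [l.IsCountablyGenerated] {φ : ι → Set α} (hφ : AECover μ l φ) {f : X → α → E} {g : α → ℝ}
    {K : Set X} (hf : ∀ x ∈ K, Integrable (f x) μ) (hg : Integrable g μ)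
    (hfg : ∀ᶠ i in l, ∀ x ∈ K, ∀ y ∉ φ i, ‖f x y‖ ≤ g y) :
    TendstoUniformlyOn (fun i x => ∫ y in φ i, f x y ∂μ) (fun x => ∫ y, f x y ∂μ) l K := by
  have htail : Tendsto (fun i => ∫ y in (φ i)ᶜ, g y ∂μ) l (𝓝 0) := by
    have := (hφ.integral_tendsto_of_countably_generated hg).const_sub (∫ y, g y ∂μ)
    rw [sub_self] at this
    refine this.congr fun i => ?_
    rw [← integral_add_compl (hφ.measurableSet i) hg, add_sub_cancel_left]
  rw [Metric.tendstoUniformlyOn_iff]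
  intro ε hε
  filter_upwards [hfg, htail.eventually_lt_const hε] with i hi hiε x hx
  have hms := hφ.measurableSet i
  calc dist (∫ y, f x y ∂μ) (∫ y in φ i, f x y ∂μ) = ‖∫ y in (φ i)ᶜ, f x y ∂μ‖ := by
        rw [dist_eq_norm, ← integral_add_compl hms (hf x hx), add_sub_cancel_left]
    _ ≤ ∫ y in (φ i)ᶜ, g y ∂μ := norm_integral_le_of_norm_le hg.integrableOn
        ((ae_restrict_iff' hms.compl).2 (.of_forall fun y hy => hi x hx y hy))
    _ < ε := hiε

lemma tendstoUniformlyOn_setIntegral_Ioo_of_isBigO {X E : Type*} [NormedAddCommGroup E]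
    [NormedSpace ℝ E] {μ : Measure ℝ} {f : X → ℝ → E} {g : ℝ → ℝ} {K : Set X}
    (hf : ∀ x ∈ K, Integrable (f x) μ) (hg : Integrable g μ)
    (hfg : (fun p : X × ℝ => f p.1 p.2) =O[𝓟 K ×ˢ cocompact ℝ] fun p => g p.2) :
    TendstoUniformlyOn (fun s x => ∫ y in Ioo (-s) s, f x y ∂μ) (fun x => ∫ y, f x y ∂μ)
      atTop K := by
  obtain ⟨C, hC⟩ := hfg.bound
  rw [eventually_swap_iff, eventually_prod_principal_iff, cocompact_eq_atBot_atTop,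
    eventually_sup, eventually_atBot, eventually_atTop] at hC
  obtain ⟨⟨a, ha⟩, b, hb⟩ := hC
  refine tendstoUniformlyOn_setIntegral_of_norm_le
    (aecover_Ioo tendsto_neg_atTop_atBot tendsto_id) hf (hg.norm.const_mul C) ?_
  filter_upwards [eventually_ge_atTop (-a), eventually_ge_atTop b] with s has hbs x hx y hy
  rcases le_or_gt y (-s) with hys | hys
  · exact ha y (by linarith) x hx
  · exact hb y (hbs.trans (not_lt.1 fun hlt => hy ⟨hys, hlt⟩)) x hx

end RealAnalysis

section AiryEquation

open Asymptotics
open scoped Topology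

/-- A real solution of the Airy equation `f'' = x f`. -/
structure IsAirySolution (f : ℝ → ℝ) : Prop where
  differentiable : Differentiable ℝ f
  hasDerivAt_deriv (x : ℝ) : HasDerivAt (deriv f) (x * f x) x

/-- The energy `f'(x)² - x f(x)²` of a solution of the Airy equation; for `f = Ai` it is the
one-point correlation function `ρ`. -/
noncomputable def airyEnergy (f : ℝ → ℝ) (x : ℝ) : ℝ := deriv f x ^ 2 - x * f x ^ 2

/-- For `τ > 0` this is `airyEnergy f (-τ²) / τ` minus its leading oscillating part as `τ → ∞`. -/
noncomputable def airyAdjustedEnergy (f : ℝ → ℝ) (τ : ℝ) : ℝ :=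
  airyEnergy f (-τ ^ 2) / τ - f (-τ ^ 2) * deriv f (-τ ^ 2) / (2 * τ ^ 3)

lemma abs_mul_deriv_le_airyEnergy (f : ℝ → ℝ) {τ : ℝ} (hτ : 0 < τ) :
    |f (-τ ^ 2) * deriv f (-τ ^ 2)| ≤ airyEnergy f (-τ ^ 2) / (2 * τ) := by
  rw [le_div_iff₀ (by positivity), airyEnergy, abs_mul]
  have := two_mul_le_add_sq (τ * |f (-τ ^ 2)|) |deriv f (-τ ^ 2)|
  simp only [mul_pow, sq_abs] at this
  linarith

lemma sq_le_airyEnergy (f : ℝ → ℝ) {x : ℝ} (hx : x ≤ -1) : f x ^ 2 ≤ airyEnergy f x := by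
  rw [airyEnergy]
  nlinarith [sq_nonneg (deriv f x), sq_nonneg (f x)]

lemma deriv_sq_le_airyEnergy (f : ℝ → ℝ) {x : ℝ} (hx : x ≤ 0) :
    deriv f x ^ 2 ≤ airyEnergy f x := by
  rw [airyEnergy]
  nlinarith [sq_nonneg (f x)]

lemma airyEnergy_nonneg_of_nonpos (f : ℝ → ℝ) {x : ℝ} (hx : x ≤ 0) : 0 ≤ airyEnergy f x :=
  (sq_nonneg _).trans (deriv_sq_le_airyEnergy f hx)

lemma le_airyAdjustedEnergy (f : ℝ → ℝ) {τ : ℝ} (hτ : 1 ≤ τ) :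
    3 / 4 * (airyEnergy f (-τ ^ 2) / τ) ≤ airyAdjustedEnergy f τ := by
  have hτ0 : 0 < τ := one_pos.trans_le hτ
  have henergy : 0 ≤ airyEnergy f (-τ ^ 2) := airyEnergy_nonneg_of_nonpos f (by nlinarith)
  have hcross : f (-τ ^ 2) * deriv f (-τ ^ 2) / (2 * τ ^ 3) ≤ airyEnergy f (-τ ^ 2) / τ / 4 := by
    calc f (-τ ^ 2) * deriv f (-τ ^ 2) / (2 * τ ^ 3)
        ≤ airyEnergy f (-τ ^ 2) / (2 * τ) / 2 := by
          gcongr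
          · exact (le_abs_self _).trans (abs_mul_deriv_le_airyEnergy f hτ0)
          · linarith [one_le_pow₀ hτ (n := 3)]
      _ = airyEnergy f (-τ ^ 2) / τ / 4 := by ring
  rw [airyAdjustedEnergy]
  linarith

lemma airyAdjustedEnergy_nonneg (f : ℝ → ℝ) {τ : ℝ} (hτ : 1 ≤ τ) :
    0 ≤ airyAdjustedEnergy f τ := by
  have henergy : 0 ≤ airyEnergy f (-τ ^ 2) := airyEnergy_nonneg_of_nonpos f (by nlinarith)
  exact (by positivity : 0 ≤ 3 / 4 * (airyEnergy f (-τ ^ 2) / τ)).trans (le_airyAdjustedEnergy f hτ)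

lemma abs_deriv_airyAdjustedEnergy_le (f : ℝ → ℝ) {τ : ℝ} (hτ : 1 ≤ τ) :
    |3 * (f (-τ ^ 2) * deriv f (-τ ^ 2)) / (2 * τ ^ 4)| ≤
      (τ ^ 4)⁻¹ * airyAdjustedEnergy f τ := by
  have hτ0 : 0 < τ := one_pos.trans_le hτ
  calc |3 * (f (-τ ^ 2) * deriv f (-τ ^ 2)) / (2 * τ ^ 4)|
      = 3 / 2 * (τ ^ 4)⁻¹ * |f (-τ ^ 2) * deriv f (-τ ^ 2)| := by
        rw [mul_div_right_comm, abs_mul, abs_of_pos (by positivity : 0 < 3 / (2 * τ ^ 4))]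
        ring
    _ ≤ 3 / 2 * (τ ^ 4)⁻¹ * (airyEnergy f (-τ ^ 2) / (2 * τ)) := by
        gcongr
        exact abs_mul_deriv_le_airyEnergy f hτ0
    _ = (τ ^ 4)⁻¹ * (3 / 4 * (airyEnergy f (-τ ^ 2) / τ)) := by ring
    _ ≤ (τ ^ 4)⁻¹ * airyAdjustedEnergy f τ := by
        gcongr
        exact le_airyAdjustedEnergy f hτ

namespace IsAirySolution

variable {f : ℝ → ℝ} (hf : IsAirySolution f)
include hf

lemma continuous_deriv : Continuous (deriv f) :=
  continuous_iff_continuousAt.2 fun x => (hf.hasDerivAt_deriv x).continuousAt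

lemma eq_zero_of_eq_zero_of_deriv_eq_zero {a : ℝ} (ha : f a = 0) (ha' : deriv f a = 0) :
    f = 0 := by
  funext x
  set R := max |a| |x|
  have hmem {t : ℝ} (ht : |t| ≤ R) : t ∈ Icc (-R) R := abs_le.1 ht
  have hle := mul_exp_neg_le_mul_exp_of_abs_deriv_le (convex_Icc (-R) R)
    (q := fun t => f t ^ 2 + deriv f t ^ 2) (q' := fun t => 2 * (1 + t) * f t * deriv f t)
    (κ := fun t => (1 + R) * (R - t)) (κ' := fun _ => -(1 + R))
    (fun t _ => (((hf.differentiable t).hasDerivAt.fun_pow 2).add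
      ((hf.hasDerivAt_deriv t).fun_pow 2)).congr_deriv (by simp only [Nat.cast_ofNat]; ring))
    (fun t _ => (((hasDerivAt_id t).const_sub R).const_mul (1 + R)).congr_deriv (by ring))
    (fun t ht => mul_nonneg (by linarith [ht.1, ht.2]) (sub_nonneg.2 ht.2))
    (fun t _ => by positivity)
    (fun t ht => by
      have h1 : |1 + t| ≤ 1 + R := (abs_add_le 1 t).trans (by simpa using abs_le.2 ht)
      calc |2 * (1 + t) * f t * deriv f t| = |1 + t| * (2 * |f t| * |deriv f t|) := by
            simp only [abs_mul, abs_two]; ring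
        _ ≤ (1 + R) * (|f t| ^ 2 + |deriv f t| ^ 2) := by
            gcongr
            exact two_mul_le_add_sq _ _
        _ = - -(1 + R) * (f t ^ 2 + deriv f t ^ 2) := by simp)
    (hmem (le_max_right |a| |x|)) (hmem (le_max_left |a| |x|))
  simp only [ha, ha', ne_eq, OfNat.ofNat_ne_zero, not_false_eq_true, zero_pow, add_zero,
    zero_mul] at hle
  have hsum := nonpos_of_mul_nonpos_left hle (Real.exp_pos _)
  exact pow_eq_zero_iff two_ne_zero |>.1 (by nlinarith [sq_nonneg (f x), sq_nonneg (deriv f x)])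

lemma hasDerivAt_airyEnergy (x : ℝ) : HasDerivAt (airyEnergy f) (-f x ^ 2) x :=
  (((hf.hasDerivAt_deriv x).fun_pow 2).sub
    ((hasDerivAt_id x).mul ((hf.differentiable x).hasDerivAt.fun_pow 2))).congr_deriv
    (by simp only [Nat.cast_ofNat, id_eq]; ring)

lemma continuous_airyEnergy : Continuous (airyEnergy f) :=
  continuous_iff_continuousAt.2 fun x => (hf.hasDerivAt_airyEnergy x).continuousAt

lemma antitone_airyEnergy : Antitone (airyEnergy f) :=
  antitone_of_hasDerivAt_nonpos hf.hasDerivAt_airyEnergy fun _ => neg_nonpos.2 (sq_nonneg _)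

lemma airyEnergy_pos_of_tendsto_zero (hne : f ≠ 0) (hlim : Tendsto (airyEnergy f) atTop (𝓝 0))
    (x : ℝ) : 0 < airyEnergy f x := by
  have hnonneg (y : ℝ) : 0 ≤ airyEnergy f y := hf.antitone_airyEnergy.le_of_tendsto hlim y
  by_contra! hx
  have henergy (y : ℝ) (hy : x ≤ y) : airyEnergy f y = 0 :=
    ((hf.antitone_airyEnergy hy).trans hx).antisymm (hnonneg y)
  have hzero (y : ℝ) (hy : x < y) : f y = 0 := by
    have hconst : airyEnergy f =ᶠ[𝓝 y] fun _ => 0 := by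
      filter_upwards [Ioi_mem_nhds hy] with z hz using henergy z hz.le
    simpa using (hf.hasDerivAt_airyEnergy y).unique
      ((hasDerivAt_const y (0 : ℝ)).congr_of_eventuallyEq hconst)
  have hlt : x < x + 1 := lt_add_one x
  have hzero' : f =ᶠ[𝓝 (x + 1)] fun _ => 0 := by
    filter_upwards [Ioi_mem_nhds hlt] with z hz using hzero z hz
  exact hne (hf.eq_zero_of_eq_zero_of_deriv_eq_zero (hzero _ hlt) (by simp [hzero'.deriv_eq]))

lemma hasDerivAt_airyAdjustedEnergy {τ : ℝ} (hτ : τ ≠ 0) :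
    HasDerivAt (airyAdjustedEnergy f) (3 * (f (-τ ^ 2) * deriv f (-τ ^ 2)) / (2 * τ ^ 4)) τ := by
  have hsq : HasDerivAt (fun τ : ℝ => -τ ^ 2) (-(2 * τ)) τ := by
    simpa using ((hasDerivAt_id τ).fun_pow 2).fun_neg
  have hf0 := (hf.differentiable (-τ ^ 2)).hasDerivAt.comp τ hsq
  have hf1 := (hf.hasDerivAt_deriv (-τ ^ 2)).comp τ hsq
  have henergy := (hf.hasDerivAt_airyEnergy (-τ ^ 2)).comp τ hsq
  have hcube := ((hasDerivAt_id τ).fun_pow 3).const_mul 2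
  refine ((henergy.div (hasDerivAt_id τ) hτ).sub
    ((hf0.mul hf1).div hcube (by simpa using hτ))).congr_deriv ?_
  simp only [Function.comp_apply, Pi.mul_apply, id_eq, airyEnergy, Nat.cast_ofNat]
  field_simp
  ring

lemma exists_forall_abs_airyAdjustedEnergy_sub_le :
    ∃ C, 0 ≤ C ∧ ∀ τ, 1 ≤ τ → |airyAdjustedEnergy f τ - C| ≤ 2 / 3 * C / τ ^ 3 := by
  have hκ (τ : ℝ) (hτ : τ ∈ Ici 1) :
      HasDerivAt (fun τ : ℝ => (3 * τ ^ 3)⁻¹) (-(τ ^ 4)⁻¹) τ := by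
    have hτ0 : τ ≠ 0 := (one_pos.trans_le (mem_Ici.1 hτ)).ne'
    refine ((((hasDerivAt_id τ).fun_pow 3).const_mul 3).fun_inv (by simpa using hτ0)).congr_deriv ?_
    simp only [id_eq, Nat.cast_ofNat]
    field_simp
  obtain ⟨C, hC⟩ := exists_forall_mul_exp_neg_le_and_le_mul_exp (convex_Ici 1) nonempty_Ici
    (fun τ hτ => hf.hasDerivAt_airyAdjustedEnergy (one_pos.trans_le (mem_Ici.1 hτ)).ne') hκ
    (fun τ hτ => by have := one_pos.trans_le (mem_Ici.1 hτ); positivity)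
    (fun τ hτ => airyAdjustedEnergy_nonneg f hτ)
    (fun τ hτ => by simpa using abs_deriv_airyAdjustedEnergy_le f hτ)
  have hC0 : 0 ≤ C := nonneg_of_mul_nonneg_left
    ((airyAdjustedEnergy_nonneg f le_rfl).trans (hC 1 self_mem_Ici).2) (Real.exp_pos _)
  refine ⟨C, hC0, fun τ hτ => ?_⟩
  have hκ_le : |(3 * τ ^ 3)⁻¹| ≤ 1 := by
    have := one_le_pow₀ hτ (n := 3)
    rw [abs_of_pos (by positivity)]
    exact inv_le_one_of_one_le₀ (by linarith)
  have hκ_nonneg : 0 ≤ (3 * τ ^ 3)⁻¹ := by positivity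
  have hexp := (abs_le.1 (Real.abs_exp_sub_one_le hκ_le)).2
  have hexp_neg := Real.one_sub_le_exp_neg (3 * τ ^ 3)⁻¹
  rw [abs_of_nonneg hκ_nonneg] at hexp
  have hbound : 2 / 3 * C / τ ^ 3 = C * (2 * (3 * τ ^ 3)⁻¹) := by field_simp
  rw [hbound, abs_le]
  constructor <;> nlinarith [hC τ hτ]

lemma exists_forall_abs_airyEnergy_sub_le :
    ∃ C, ∀ τ, 1 ≤ τ → |airyEnergy f (-τ ^ 2) - C * τ| ≤ 2 * C / τ ^ 2 := by
  obtain ⟨C, hC0, hC⟩ := hf.exists_forall_abs_airyAdjustedEnergy_sub_le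
  refine ⟨C, fun τ hτ => ?_⟩
  have hτ0 : 0 < τ := one_pos.trans_le hτ
  set E := airyEnergy f (-τ ^ 2)
  set Q := airyAdjustedEnergy f τ
  set P := f (-τ ^ 2) * deriv f (-τ ^ 2)
  have hQ_le : Q ≤ 5 / 3 * C := by
    have : 2 / 3 * C / τ ^ 3 ≤ 2 / 3 * C := div_le_self (by positivity) (one_le_pow₀ hτ)
    linarith [(abs_le.1 (hC τ hτ)).2]
  have hE_le : E / τ ≤ 20 / 9 * C := by linarith [le_airyAdjustedEnergy f hτ]
  have hP_le : |P| ≤ 10 / 9 * C := by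
    calc |P| ≤ E / (2 * τ) := abs_mul_deriv_le_airyEnergy f hτ0
      _ = E / τ / 2 := by ring
      _ ≤ 10 / 9 * C := by linarith
  calc |E - C * τ| = |τ * (Q - C) + P / (2 * τ ^ 2)| := by
        congr 1
        simp only [Q, airyAdjustedEnergy]
        field_simp
        ring
    _ ≤ |τ * (Q - C)| + |P / (2 * τ ^ 2)| := abs_add_le _ _
    _ = τ * |Q - C| + |P| / (2 * τ ^ 2) := by
        rw [abs_mul, abs_div, abs_of_pos hτ0, abs_of_pos (by positivity : 0 < 2 * τ ^ 2)]
    _ ≤ τ * (2 / 3 * C / τ ^ 3) + 10 / 9 * C / (2 * τ ^ 2) := by gcongr; exact hC τ hτ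
    _ = 11 / 9 * C / τ ^ 2 := by field_simp; ring
    _ ≤ 2 * C / τ ^ 2 := by gcongr; norm_num

lemma exists_airyEnergy_sub_sqrt_isBigO :
    ∃ C, (fun x => airyEnergy f x - C * √(-x)) =O[atBot] fun x => x⁻¹ := by
  obtain ⟨C, hC⟩ := hf.exists_forall_abs_airyEnergy_sub_le
  refine ⟨C, .of_bound (2 * C) ?_⟩
  filter_upwards [eventually_le_atBot (-1)] with x hx
  have hsq : √(-x) ^ 2 = -x := Real.sq_sqrt (by linarith)
  have h := hC (√(-x)) (Real.one_le_sqrt.2 (by linarith))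
  have hinv : 2 * C / -x = 2 * C * ‖x⁻¹‖ := by
    rw [norm_inv, Real.norm_of_nonpos (by linarith), div_eq_mul_inv]
  rwa [hsq, neg_neg, hinv] at h

end IsAirySolution

end AiryEquation

section DecayingSolutions

open Asymptotics
open scoped Topology

lemma airyEnergy_isBigO_exp_neg {f : ℝ → ℝ} (hf : f =O[atTop] fun x => Real.exp (-x))
    (hf' : deriv f =O[atTop] fun x => Real.exp (-x)) :
    airyEnergy f =O[atTop] fun x => Real.exp (-x) := by
  have hexp : (fun x : ℝ => Real.exp (-x)) =O[atTop] (1 : ℝ → ℝ) :=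
    (Real.tendsto_exp_neg_atTop_nhds_zero.isBigO_one ℝ)
  have hlin : (fun x : ℝ => x * Real.exp (-x)) =O[atTop] (1 : ℝ → ℝ) :=
    (by simpa using Real.tendsto_pow_mul_exp_neg_atTop_nhds_zero 1 :
      Tendsto (fun x : ℝ => x * Real.exp (-x)) atTop (𝓝 0)).isBigO_one ℝ
  refine IsBigO.sub ?_ ?_
  · simpa [pow_two] using hf'.mul (hf'.trans hexp)
  · refine ((isBigO_refl (fun x : ℝ => x) atTop).mul (hf.mul hf)).trans ?_ |>.congr_left
      fun x => by rw [pow_two]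
    simpa [mul_assoc] using hlin.mul (isBigO_refl (fun x : ℝ => Real.exp (-x)) atTop)

namespace IsAirySolution

variable {f : ℝ → ℝ} (hf : IsAirySolution f)
include hf

lemma airyEnergy_isBigO_sqrt : airyEnergy f =O[atBot] fun x => √(-x) := by
  obtain ⟨C, hC⟩ := hf.exists_airyEnergy_sub_sqrt_isBigO
  have hinv : (fun x : ℝ => x⁻¹) =O[atBot] fun x => √(-x) := by
    refine .of_bound 1 ?_
    filter_upwards [eventually_le_atBot (-1)] with x hx
    rw [norm_inv, Real.norm_of_nonpos (by linarith), Real.norm_of_nonneg (Real.sqrt_nonneg _),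
      one_mul]
    exact (inv_le_one_of_one_le₀ (by linarith)).trans (Real.one_le_sqrt.2 (by linarith))
  simpa using (hC.trans hinv).add ((isBigO_refl (fun x : ℝ => √(-x)) atBot).const_mul_left C)

lemma sq_isBigO_sqrt : (fun x => f x ^ 2) =O[atBot] fun x => √(-x) := by
  refine (IsBigO.of_norm_eventuallyLE ?_).trans hf.airyEnergy_isBigO_sqrt
  filter_upwards [eventually_le_atBot (-1)] with x hx
  simpa using sq_le_airyEnergy f hx

lemma deriv_sq_isBigO_sqrt : (fun x => deriv f x ^ 2) =O[atBot] fun x => √(-x) := by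
  refine (IsBigO.of_norm_eventuallyLE ?_).trans hf.airyEnergy_isBigO_sqrt
  filter_upwards [eventually_le_atBot 0] with x hx
  simpa using deriv_sq_le_airyEnergy f hx

lemma isBigO_sqrt : f =O[atBot] fun x => √(-x) := isBigO_sqrt_neg_of_sq hf.sq_isBigO_sqrt

lemma deriv_isBigO_sqrt : deriv f =O[atBot] fun x => √(-x) :=
  isBigO_sqrt_neg_of_sq hf.deriv_sq_isBigO_sqrt

lemma integral_exp_mul_mul_airyEnergy {c : ℝ} (hc : c ∈ Ioo 0 1)
    (htop : f =O[atTop] fun x => Real.exp (-x))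
    (htop' : deriv f =O[atTop] fun x => Real.exp (-x)) :
    c * ∫ x, Real.exp (c * x) * airyEnergy f x = ∫ x, Real.exp (c * x) * f x ^ 2 := by
  have hsqrt : (fun x : ℝ => √(-x)) = fun x => (-x) ^ (1 / 2 : ℝ) :=
    funext fun x => Real.sqrt_eq_rpow (-x)
  have hsq_top : (fun x => f x ^ 2) =O[atTop] fun x => Real.exp (-x) := by
    simpa [pow_two] using htop.mul (htop.trans (Real.tendsto_exp_neg_atTop_nhds_zero.isBigO_one ℝ))
  have henergy := integrable_exp_mul_mul_of_isBigO hc hf.continuous_airyEnergy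
    (hsqrt ▸ hf.airyEnergy_isBigO_sqrt) (airyEnergy_isBigO_exp_neg htop htop')
  have hsq := integrable_exp_mul_mul_of_isBigO hc (hf.differentiable.continuous.pow 2)
    (hsqrt ▸ hf.sq_isBigO_sqrt) hsq_top
  have hexp (x : ℝ) : HasDerivAt (fun x => Real.exp (c * x)) (c * Real.exp (c * x)) x := by
    simpa [mul_comm] using ((hasDerivAt_id x).const_mul c).exp
  have hparts := integral_mul_deriv_eq_deriv_mul_of_integrable (fun x _ => hexp x)
    (fun x _ => hf.hasDerivAt_airyEnergy x) (by simpa [Pi.mul_def] using hsq.neg)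
    (by simpa [Pi.mul_def, mul_assoc] using henergy.const_mul c) henergy
  simp only [mul_neg, mul_assoc, integral_neg, integral_const_mul] at hparts
  linarith

end IsAirySolution

end DecayingSolutions

section ContourRepresentation

open Complex Asymptotics
open scoped Topology Real

/-- The exponential `e^{i(z³/3 + xz)}` whose contour integrals represent the Airy function. -/
noncomputable def airyIntegrand (x : ℝ) (z : ℂ) : ℂ := exp (I * (z ^ 3 / 3 + x * z))

lemma norm_airyIntegrand (x t y : ℝ) :
    ‖airyIntegrand x (t + y * I)‖ = Real.exp (y ^ 3 / 3 - y * x) * Real.exp (-y * t ^ 2) := by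
  rw [airyIntegrand, norm_exp, ← Real.exp_add]
  congr 1
  simp only [pow_succ, pow_zero, one_mul, mul_re, I_re, add_re, div_ofNat_re, ofReal_re, mul_zero,
    ofReal_im, I_im, mul_one, sub_self, add_zero, add_im, mul_im, zero_add, zero_mul, sub_zero,
    div_ofNat_im, zero_sub, neg_add_rev, neg_mul]
  ring

lemma differentiable_airyIntegrand (x : ℝ) : Differentiable ℂ (airyIntegrand x) := by
  unfold airyIntegrand; fun_prop

@[fun_prop]
lemma continuous_airyIntegrand (x : ℝ) : Continuous (airyIntegrand x) :=
  (differentiable_airyIntegrand x).continuous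

lemma integral_airyIntegrand_ofReal (x b : ℝ) :
    ∫ t in (-b)..b, airyIntegrand x (t : ℂ) =
      (2 * ∫ t in (0 : ℝ)..b, Real.cos (t ^ 3 / 3 + x * t) : ℝ) := by
  have hcont : Continuous fun t : ℝ => airyIntegrand x (t : ℂ) := by fun_prop
  have hcont_neg : Continuous fun t : ℝ => airyIntegrand x ((-t : ℝ) : ℂ) := by fun_prop
  have hint (a b : ℝ) := hcont.intervalIntegrable (μ := volume) a b
  have hcos (t : ℝ) : airyIntegrand x (t : ℂ) + airyIntegrand x ((-t : ℝ) : ℂ) =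
      (2 * Real.cos (t ^ 3 / 3 + x * t) : ℝ) := by
    simp only [airyIntegrand]
    push_cast
    rw [two_cos]
    ring_nf
  have hneg : ∫ t in (-b)..0, airyIntegrand x (t : ℂ) =
      ∫ t in (0 : ℝ)..b, airyIntegrand x ((-t : ℝ) : ℂ) := by
    rw [intervalIntegral.integral_comp_neg (fun t : ℝ => airyIntegrand x (t : ℂ)), neg_zero]
  rw [← intervalIntegral.integral_add_adjacent_intervals (hint (-b) 0) (hint 0 b), hneg, add_comm,
    ← intervalIntegral.integral_add (hint 0 b) (hcont_neg.intervalIntegrable 0 b)]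
  simp_rw [hcos]
  rw [intervalIntegral.integral_ofReal, intervalIntegral.integral_const_mul]

lemma tendsto_integral_airyIntegrand_side (x : ℝ) {η σ : ℝ} (hη : 0 < η) (hσ : σ ≠ 0) :
    Tendsto (fun b : ℝ => ∫ y in (0 : ℝ)..η, airyIntegrand x ((σ * b : ℝ) + y * I)) atTop
      (𝓝 0) := by
  rw [← intervalIntegral.integral_zero (a := 0) (b := η) (μ := volume) (E := ℂ)]
  refine intervalIntegral.tendsto_integral_filter_of_dominated_convergence
    (fun y => Real.exp (y ^ 3 / 3 - y * x))
    (.of_forall fun b => (by fun_prop : Continuous _).aestronglyMeasurable)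
    (.of_forall fun b => .of_forall fun y hy => ?_)
    ((by fun_prop : Continuous _).intervalIntegrable _ _) (.of_forall fun y hy => ?_)
  all_goals rw [uIoc_of_le hη.le] at hy
  · rw [norm_airyIntegrand]
    exact mul_le_of_le_one_right (Real.exp_pos _).le
      (Real.exp_le_one_iff.2 (by nlinarith [hy.1, sq_nonneg (σ * b)]))
  · rw [tendsto_zero_iff_norm_tendsto_zero]
    simp_rw [norm_airyIntegrand]
    have hquad : Tendsto (fun b : ℝ => -y * (σ * b) ^ 2) atTop atBot := by
      simp_rw [mul_pow, neg_mul, ← mul_assoc]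
      exact tendsto_neg_atTop_atBot.comp ((tendsto_pow_atTop two_ne_zero).const_mul_atTop
        (mul_pos hy.1 (by positivity)))
    simpa using (Real.tendsto_exp_atBot.comp hquad).const_mul (Real.exp (y ^ 3 / 3 - y * x))

lemma integrable_norm_pow_mul_exp {η : ℝ} (hη : 0 < η) (k : ℕ) :
    Integrable fun t : ℝ => ‖(t + η * I : ℂ)‖ ^ k * Real.exp (-η * t ^ 2) := by
  have hpow : Integrable fun t : ℝ => |t| ^ k * Real.exp (-η * t ^ 2) := by
    have := (integrable_rpow_mul_exp_neg_mul_sq hη (s := k)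
      (by linarith [k.cast_nonneg (α := ℝ)])).norm
    simpa [Real.rpow_natCast] using this
  refine ((hpow.add ((integrable_exp_neg_mul_sq hη).const_mul (η ^ k))).const_mul
    (2 ^ (k - 1))).mono' (by fun_prop : Continuous _).aestronglyMeasurable (.of_forall fun t => ?_)
  have hnorm : ‖(t + η * I : ℂ)‖ ≤ |t| + η := by
    simpa [abs_of_pos hη] using norm_add_le (t : ℂ) (η * I)
  rw [norm_mul, norm_pow, norm_norm, Real.norm_of_nonneg (Real.exp_pos _).le]
  calc ‖(t + η * I : ℂ)‖ ^ k * Real.exp (-η * t ^ 2)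
      ≤ (2 ^ (k - 1) * (|t| ^ k + η ^ k)) * Real.exp (-η * t ^ 2) := by
        gcongr
        exact (pow_le_pow_left₀ (norm_nonneg _) hnorm k).trans (add_pow_le (abs_nonneg t) hη.le k)
    _ = 2 ^ (k - 1) * (|t| ^ k * Real.exp (-η * t ^ 2) + η ^ k * Real.exp (-η * t ^ 2)) := by ring

/-- The `k`-th derivative of `2π Ai`, as the moment of `airyIntegrand` on the line `Im z = η`. -/
noncomputable def airyMoment (η : ℝ) (k : ℕ) (x : ℝ) : ℂ :=
  ∫ t : ℝ, (I * (t + η * I)) ^ k * airyIntegrand x (t + η * I)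

lemma norm_airyMoment_integrand (η : ℝ) (k : ℕ) (x t : ℝ) :
    ‖(I * (t + η * I)) ^ k * airyIntegrand x (t + η * I)‖ =
      Real.exp (η ^ 3 / 3 - η * x) * (‖(t + η * I : ℂ)‖ ^ k * Real.exp (-η * t ^ 2)) := by
  rw [norm_mul, norm_pow, norm_mul, norm_I, one_mul, norm_airyIntegrand]
  ring

lemma integrable_airyMoment_integrand {η : ℝ} (hη : 0 < η) (k : ℕ) (x : ℝ) :
    Integrable fun t : ℝ => (I * (t + η * I)) ^ k * airyIntegrand x (t + η * I) :=
  ((integrable_norm_pow_mul_exp hη k).const_mul _).mono'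
    (by fun_prop : Continuous _).aestronglyMeasurable
    (.of_forall fun t => (norm_airyMoment_integrand η k x t).le)

lemma airyMoment_isBigO (η : ℝ) (k : ℕ) (l : Filter ℝ) :
    airyMoment η k =O[l] fun x => Real.exp (-(η * x)) := by
  refine .of_bound (Real.exp (η ^ 3 / 3) * ∫ t : ℝ, ‖(t + η * I : ℂ)‖ ^ k * Real.exp (-η * t ^ 2))
    (.of_forall fun x => ?_)
  refine (norm_integral_le_integral_norm _).trans_eq ?_
  simp_rw [norm_airyMoment_integrand]
  rw [integral_const_mul, Real.norm_of_nonneg (Real.exp_pos _).le, sub_eq_add_neg, Real.exp_add]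
  ring

lemma hasDerivAt_airyMoment {η : ℝ} (hη : 0 < η) (k : ℕ) (x : ℝ) :
    HasDerivAt (airyMoment η k) (airyMoment η (k + 1) x) x := by
  refine (hasDerivAt_integral_of_dominated_loc_of_deriv_le (𝕜 := ℝ) (s := Metric.ball x 1)
    (F := fun x (t : ℝ) => (I * (t + η * I)) ^ k * airyIntegrand x (t + η * I))
    (F' := fun x (t : ℝ) => (I * (t + η * I)) ^ (k + 1) * airyIntegrand x (t + η * I))
    (Metric.ball_mem_nhds x one_pos)
    (.of_forall fun y => (by fun_prop : Continuous _).aestronglyMeasurable)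
    (integrable_airyMoment_integrand hη k x) (by fun_prop : Continuous _).aestronglyMeasurable
    (.of_forall fun t y hy => ?_)
    ((integrable_norm_pow_mul_exp hη (k + 1)).const_mul (Real.exp (η ^ 3 / 3 - η * (x - 1))))
    (.of_forall fun t y _ => ?_)).2
  · rw [norm_airyMoment_integrand]
    rw [Real.ball_eq_Ioo] at hy
    gcongr
    exact hy.1.le
  · have hlin : HasDerivAt (fun y : ℝ => I * ((t + η * I : ℂ) ^ 3 / 3 + y * (t + η * I)))
        (I * (t + η * I)) y := by
      simpa using (((ofRealCLM.hasDerivAt (x := y)).mul_const (t + η * I : ℂ)).const_add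
        ((t + η * I : ℂ) ^ 3 / 3)).const_mul I
    refine (hlin.cexp.const_mul ((I * (t + η * I)) ^ k)).congr_deriv ?_
    rw [airyIntegrand]
    ring

lemma airyMoment_two {η : ℝ} (hη : 0 < η) (x : ℝ) : airyMoment η 2 x = x * airyMoment η 0 x := by
  have hderiv (t : ℝ) : HasDerivAt (fun t : ℝ => airyIntegrand x (t + η * I))
      (I * (x * ((I * (t + η * I)) ^ 0 * airyIntegrand x (t + η * I)) -
        (I * (t + η * I)) ^ 2 * airyIntegrand x (t + η * I))) t := by
    have hline : HasDerivAt (fun t : ℝ => (t + η * I : ℂ)) 1 t := by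
      simpa using (ofRealCLM.hasDerivAt (x := t)).add_const (η * I)
    refine ((((hline.fun_pow 3).div_const 3).add
      (hline.const_mul (x : ℂ))).const_mul I).cexp.congr_deriv ?_
    simp only [Pi.add_apply, airyIntegrand, mul_pow I _ 2, I_sq]
    push_cast
    ring
  have hzero := (integrable_airyMoment_integrand hη 0 x).const_mul (x : ℂ)
  have htwo := integrable_airyMoment_integrand hη 2 x
  have htotal := integral_eq_zero_of_hasDerivAt_of_integrable hderiv ((hzero.sub htwo).const_mul I)
    (by simpa using integrable_airyMoment_integrand hη 0 x)
  rw [integral_const_mul, integral_sub hzero htwo, integral_const_mul] at htotal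
  exact (sub_eq_zero.1 ((mul_eq_zero.1 htotal).resolve_left I_ne_zero)).symm

lemma two_pi_mul_Ai {η : ℝ} (hη : 0 < η) (x : ℝ) :
    ((2 * π * Ai x : ℝ) : ℂ) = airyMoment η 0 x := by
  have hline : Tendsto (fun b : ℝ => ∫ t in (-b)..b, airyIntegrand x (t + η * I)) atTop
      (𝓝 (airyMoment η 0 x)) := by
    simpa [airyMoment] using intervalIntegral_tendsto_integral
      (integrable_airyMoment_integrand hη 0 x) tendsto_neg_atTop_atBot tendsto_id
  have hcontour : Tendsto
      (fun b : ℝ => ((2 * ∫ t in (0 : ℝ)..b, Real.cos (t ^ 3 / 3 + x * t) : ℝ) : ℂ)) atTop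
      (𝓝 (airyMoment η 0 x)) := by
    have hsides := (hline.sub
      ((tendsto_integral_airyIntegrand_side x hη one_ne_zero).const_smul I)).add
      ((tendsto_integral_airyIntegrand_side x hη (neg_ne_zero.2 one_ne_zero)).const_smul I)
    simp only [smul_zero, sub_zero, add_zero] at hsides
    refine hsides.congr fun b => ?_
    have hrect := integral_boundary_rect_eq_zero_of_differentiableOn (airyIntegrand x)
      (((-b : ℝ) : ℂ)) ((b : ℂ) + η * I) (differentiable_airyIntegrand x).differentiableOn
    simp only [ofReal_neg, neg_im, ofReal_im, neg_zero, ofReal_zero, zero_mul, add_zero, neg_re,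
      ofReal_re, add_re, mul_re, I_re, mul_zero, I_im, mul_one, sub_self, add_im, mul_im, zero_add,
      smul_eq_mul] at hrect
    rw [← integral_airyIntegrand_ofReal]
    simp only [one_mul, neg_one_mul, ofReal_neg, smul_eq_mul]
    linear_combination -hrect
  have hre := (continuous_re.tendsto _).comp hcontour
  have him := (continuous_im.tendsto _).comp hcontour
  simp only [Function.comp_def, ofReal_re, ofReal_im] at hre him
  have hlim : Tendsto (fun b : ℝ => ∫ t in (0 : ℝ)..b, Real.cos (t ^ 3 / 3 + x * t)) atTop
      (𝓝 ((airyMoment η 0 x).re / 2)) := by simpa using hre.div_const 2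
  apply Complex.ext
  · rw [ofReal_re, Ai, hlim.limUnder_eq]
    field_simp
  · rw [ofReal_im, tendsto_nhds_unique him tendsto_const_nhds]

end ContourRepresentation

section AiryFunction

open Complex Asymptotics
open scoped Topology FourierTransform Real

lemma Ai_eq_re_airyMoment : Ai = fun x => (airyMoment 1 0 x).re / (2 * π) := by
  funext x
  rw [← two_pi_mul_Ai one_pos, ofReal_re]
  field_simp

lemma hasDerivAt_re_airyMoment_div {η : ℝ} (hη : 0 < η) (k : ℕ) (x : ℝ) :
    HasDerivAt (fun x => (airyMoment η k x).re / (2 * π))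
      ((airyMoment η (k + 1) x).re / (2 * π)) x :=
  (reCLM.hasFDerivAt.comp_hasDerivAt x (hasDerivAt_airyMoment hη k x)).div_const (2 * π)

lemma deriv_Ai_eq_re_airyMoment : deriv Ai = fun x => (airyMoment 1 1 x).re / (2 * π) :=
  Ai_eq_re_airyMoment ▸ funext fun x => (hasDerivAt_re_airyMoment_div one_pos 0 x).deriv

lemma isAirySolution_Ai : IsAirySolution Ai where
  differentiable :=
    Ai_eq_re_airyMoment ▸ fun x => (hasDerivAt_re_airyMoment_div one_pos 0 x).differentiableAt
  hasDerivAt_deriv x := by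
    rw [deriv_Ai_eq_re_airyMoment]
    refine (hasDerivAt_re_airyMoment_div one_pos 1 x).congr_deriv ?_
    rw [airyMoment_two one_pos, re_ofReal_mul, mul_div_assoc, Ai_eq_re_airyMoment]

lemma re_airyMoment_div_isBigO (k : ℕ) :
    (fun x => (airyMoment 1 k x).re / (2 * π)) =O[atTop] fun x => Real.exp (-x) := by
  have hmoment : (fun x => (airyMoment 1 k x).re) =O[atTop] fun x => Real.exp (-x) := by
    simpa only [one_mul] using
      (IsBigO.of_norm_le fun x => abs_re_le_norm (airyMoment 1 k x)).trans
        (airyMoment_isBigO 1 k atTop).norm_left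
  simpa only [div_eq_inv_mul] using hmoment.const_mul_left (2 * π)⁻¹

lemma Ai_isBigO_exp_neg : Ai =O[atTop] fun x => Real.exp (-x) :=
  Ai_eq_re_airyMoment ▸ re_airyMoment_div_isBigO 0

lemma deriv_Ai_isBigO_exp_neg : deriv Ai =O[atTop] fun x => Real.exp (-x) :=
  deriv_Ai_eq_re_airyMoment ▸ re_airyMoment_div_isBigO 1

lemma continuous_Ai : Continuous Ai := isAirySolution_Ai.differentiable.continuous

lemma continuous_rho : Continuous rho := isAirySolution_Ai.continuous_airyEnergy

lemma integrable_exp_mul_mul_Ai {c : ℝ} (hc : c ∈ Ioo 0 1) :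
    Integrable fun x => Real.exp (c * x) * Ai x := by
  have hbot : Ai =O[atBot] fun x => (-x) ^ (1 / 2 : ℝ) :=
    isAirySolution_Ai.isBigO_sqrt.congr_right fun x => Real.sqrt_eq_rpow (-x)
  exact integrable_exp_mul_mul_of_isBigO hc continuous_Ai hbot Ai_isBigO_exp_neg

lemma fourier_airyIntegrand {η : ℝ} (hη : 0 < η) (v : ℝ) :
    𝓕 (fun t : ℝ => airyIntegrand 0 (t + η * I)) v =
      (2 * π * (Real.exp (η * (-2 * π * v)) * Ai (-2 * π * v)) : ℝ) := by
  rw [Real.fourier_real_eq_integral_exp_smul, mul_left_comm, ofReal_mul, two_pi_mul_Ai hη,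
    airyMoment, ← integral_const_mul]
  congr with t
  simp only [airyIntegrand, smul_eq_mul, ofReal_exp, pow_zero, one_mul, ← Complex.exp_add]
  congr 1
  push_cast
  linear_combination 2 * π * η * v * I_sq

lemma integral_exp_mul_mul_Ai_sq {c : ℝ} (hc : c ∈ Ioo 0 1) :
    ∫ x, Real.exp (c * x) * Ai x ^ 2 = Real.exp (c ^ 3 / 12) * √(π / c) / (2 * π) := by
  have hη : 0 < c / 2 := half_pos hc.1
  have hF : 𝓕 (fun t : ℝ => airyIntegrand 0 (t + (c / 2 : ℝ) * I)) = fun v =>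
      ((2 * π * (Real.exp (c / 2 * (-2 * π * v)) * Ai (-2 * π * v)) : ℝ) : ℂ) :=
    funext (fourier_airyIntegrand hη)
  have hFint : Integrable (𝓕 fun t : ℝ => airyIntegrand 0 (t + (c / 2 : ℝ) * I)) := by
    rw [hF]
    exact (((integrable_exp_mul_mul_Ai ⟨hη, by linarith [hc.1, hc.2]⟩).comp_mul_left'
      (R := -2 * π) (by simp)).const_mul (2 * π)).ofReal
  have hparseval := integral_norm_sq_fourier_eq (by fun_prop)
    (by simpa using integrable_airyMoment_integrand hη 0 0) hFint
  have hspectral (v : ℝ) :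
      ‖((2 * π * (Real.exp (c / 2 * (-2 * π * v)) * Ai (-2 * π * v)) : ℝ) : ℂ)‖ ^ 2 =
        (2 * π) ^ 2 * (fun x => Real.exp (c * x) * Ai x ^ 2) (-2 * π * v) := by
    rw [norm_real, Real.norm_eq_abs, sq_abs, mul_pow (2 * π), mul_pow (Real.exp _),
      ← Real.exp_nat_mul]
    push_cast
    ring_nf
  have hgaussian (t : ℝ) : ‖airyIntegrand 0 (t + (c / 2 : ℝ) * I)‖ ^ 2 =
      Real.exp (c ^ 3 / 12) * Real.exp (-c * t ^ 2) := by
    rw [norm_airyIntegrand, ← Real.exp_add, ← Real.exp_add, ← Real.exp_nat_mul]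
    push_cast
    ring_nf
  simp_rw [hF, hspectral, hgaussian] at hparseval
  rw [integral_const_mul, integral_const_mul, integral_gaussian,
    Measure.integral_comp_mul_left (fun x => Real.exp (c * x) * Ai x ^ 2), smul_eq_mul,
    abs_inv, abs_mul, abs_neg, abs_two, abs_of_pos Real.pi_pos] at hparseval
  rw [← hparseval]
  field_simp

lemma Ai_ne_zero : Ai ≠ 0 := by
  intro hzero
  have hlaplace := integral_exp_mul_mul_Ai_sq (c := 1 / 2) ⟨by norm_num, by norm_num⟩
  simp only [hzero, Pi.zero_apply, zero_pow two_ne_zero, mul_zero, integral_zero] at hlaplace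
  exact hlaplace.not_lt (by positivity)

lemma rho_isBigO_exp_neg : rho =O[atTop] fun x => Real.exp (-x) :=
  airyEnergy_isBigO_exp_neg Ai_isBigO_exp_neg deriv_Ai_isBigO_exp_neg

lemma rho_pos (x : ℝ) : 0 < rho x :=
  isAirySolution_Ai.airyEnergy_pos_of_tendsto_zero Ai_ne_zero
    (rho_isBigO_exp_neg.trans_tendsto Real.tendsto_exp_neg_atTop_nhds_zero) x

lemma tendsto_rpow_mul_integral_exp_mul_mul_rho :
    Tendsto (fun c => c ^ (1 / 2 + 1 : ℝ) * ∫ x, Real.exp (c * x) * rho x) (𝓝[>] 0)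
      (𝓝 (1 / (2 * √π))) := by
  have hlim : Tendsto (fun c : ℝ => Real.exp (c ^ 3 / 12) * (1 / (2 * √π))) (𝓝[>] 0)
      (𝓝 (1 / (2 * √π))) := by
    have hcont : Continuous fun c : ℝ => Real.exp (c ^ 3 / 12) * (1 / (2 * √π)) := by fun_prop
    simpa using (hcont.tendsto 0).mono_left nhdsWithin_le_nhds
  refine hlim.congr' ?_
  filter_upwards [Ioo_mem_nhdsGT one_pos] with c hc
  have hparts : c * ∫ x, Real.exp (c * x) * rho x = Real.exp (c ^ 3 / 12) * √(π / c) / (2 * π) :=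
    (isAirySolution_Ai.integral_exp_mul_mul_airyEnergy hc Ai_isBigO_exp_neg
      deriv_Ai_isBigO_exp_neg).trans (integral_exp_mul_mul_Ai_sq hc)
  have hsqrt_c : √c ≠ 0 := (Real.sqrt_pos.2 hc.1).ne'
  have hsqrt_pi : √π ≠ 0 := (Real.sqrt_pos.2 Real.pi_pos).ne'
  rw [Real.rpow_add hc.1, Real.rpow_one, ← Real.sqrt_eq_rpow, mul_assoc, hparts,
    Real.sqrt_div Real.pi_pos.le]
  nth_rewrite 3 [← Real.sq_sqrt Real.pi_pos.le]
  field_simp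

lemma rho_sub_sqrt_isBigO : (fun x => rho x - √(-x) / π) =O[atBot] fun x => x⁻¹ := by
  obtain ⟨C, hC⟩ := isAirySolution_Ai.exists_airyEnergy_sub_sqrt_isBigO
  change (fun x => rho x - C * √(-x)) =O[atBot] fun x => x⁻¹ at hC
  have hbot : (fun x => rho x - C * max (-x) 0 ^ (1 / 2 : ℝ)) =O[atBot] (1 : ℝ → ℝ) := by
    refine (hC.trans ((tendsto_inv_atBot_zero (𝕜 := ℝ)).isBigO_one ℝ)).congr' ?_ .rfl
    filter_upwards [eventually_le_atBot 0] with x hx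
    rw [max_eq_left (by linarith), Real.sqrt_eq_rpow]
  have habel := tendsto_rpow_mul_integral_exp_mul_mul (by norm_num : (0 : ℝ) < 1 / 2)
    continuous_rho hbot rho_isBigO_exp_neg
  have hgamma : Real.Gamma (1 / 2 + 1) = √π / 2 := by
    rw [Real.Gamma_add_one (by norm_num), Real.Gamma_one_half_eq]
    ring
  have heq := tendsto_nhds_unique habel tendsto_rpow_mul_integral_exp_mul_mul_rho
  have hsqrt_pi : √π ≠ 0 := (Real.sqrt_pos.2 Real.pi_pos).ne'
  rw [hgamma, eq_div_iff (by positivity)] at heq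
  have hCπ : C * π = 1 := by
    nth_rewrite 1 [← Real.sq_sqrt Real.pi_pos.le]
    linear_combination heq
  simpa only [eq_one_div_of_mul_eq_one_left hCπ, one_div, inv_mul_eq_div] using hC

end AiryFunction

section PowerWeights

open Asymptotics

variable {α E : Type*} [NormedAddCommGroup E] {l : Filter α}

lemma isBigO_mul_one_add_norm_rpow {f g : α → ℝ} {w : α → E} {a b c : ℝ}
    (hf : f =O[l] fun x => (1 + ‖w x‖) ^ a) (hg : g =O[l] fun x => (1 + ‖w x‖) ^ b)
    (hc : a + b ≤ c) : (fun x => f x * g x) =O[l] fun x => (1 + ‖w x‖) ^ c := by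
  refine (hf.mul hg).trans (.of_norm_le fun x => ?_)
  rw [← Real.rpow_add (by positivity), Real.norm_of_nonneg (by positivity)]
  exact Real.rpow_le_rpow_of_exponent_le (by simp) hc

lemma inv_sub_isBigO_one_add_norm_rpow {f w : α → ℝ} (hf : f =O[l] (1 : α → ℝ))
    (hw : Tendsto w l (cocompact ℝ)) :
    (fun x => (f x - w x)⁻¹) =O[l] fun x => (1 + ‖w x‖) ^ (-1 : ℝ) := by
  obtain ⟨M, hM⟩ := hf.bound
  refine .of_bound 2 ?_
  filter_upwards [hM, (tendsto_norm_cocompact_atTop.comp hw).eventually_ge_atTop (2 * M + 1)]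
    with x hfx hwx
  simp only [Pi.one_apply, norm_one, mul_one] at hfx
  simp only [Function.comp_apply] at hwx
  have hdist : (1 + ‖w x‖) / 2 ≤ ‖f x - w x‖ := by
    have := norm_sub_norm_le (w x) (f x)
    rw [norm_sub_rev] at this
    linarith
  rw [norm_inv, Real.rpow_neg_one, Real.norm_of_nonneg (by positivity : 0 ≤ (1 + ‖w x‖)⁻¹)]
  exact (inv_anti₀ (by positivity) hdist).trans_eq (by rw [inv_div, div_eq_mul_inv])

lemma inv_isBigO_one_add_norm_rpow :
    (fun y : ℝ => y⁻¹) =O[cocompact ℝ] fun y => (1 + ‖y‖) ^ (-1 : ℝ) := by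
  simpa using (inv_sub_isBigO_one_add_norm_rpow (f := 0) (isBigO_zero _ _) tendsto_id).neg_left

lemma sqrt_neg_isBigO_one_add_norm_rpow (l : Filter ℝ) :
    (fun y : ℝ => √(-y)) =O[l] fun y => (1 + ‖y‖) ^ (1 / 2 : ℝ) := by
  refine .of_norm_le fun y => ?_
  rw [Real.norm_of_nonneg (Real.sqrt_nonneg _), ← Real.sqrt_eq_rpow]
  exact Real.sqrt_le_sqrt (by linarith [neg_le_abs y, Real.norm_eq_abs y])

lemma exp_neg_isBigO_one_add_norm_rpow (r : ℝ) :
    (fun y => Real.exp (-y)) =O[atTop] fun y : ℝ => (1 + ‖y‖) ^ r := by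
  have hshift := ((isLittleO_exp_neg_mul_rpow_atTop one_pos r).comp_tendsto
    (tendsto_atTop_add_const_left atTop (1 : ℝ) tendsto_id)).isBigO.const_mul_left (Real.exp 1)
  refine hshift.congr' (.of_forall fun y => ?_) ?_
  · simp [← Real.exp_add]
  · filter_upwards [eventually_ge_atTop 0] with y hy
    simp [abs_of_nonneg hy]

lemma isBigO_cocompact_of_sqrt_neg_of_exp_neg {f : ℝ → ℝ}
    (hbot : f =O[atBot] fun x => √(-x)) (htop : f =O[atTop] fun x => Real.exp (-x)) :
    f =O[cocompact ℝ] fun y => (1 + ‖y‖) ^ (1 / 2 : ℝ) := by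
  rw [cocompact_eq_atBot_atTop]
  exact (hbot.trans (sqrt_neg_isBigO_one_add_norm_rpow _)).sup
    (htop.trans (exp_neg_isBigO_one_add_norm_rpow _))

end PowerWeights

section CompactParameter

open Asymptotics

variable {X α : Type*} [TopologicalSpace X] {l : Filter α} {K : Set X} (hK : IsCompact K)
include hK

lemma isBigO_one_fst_of_isCompact {f : X → ℝ} (hf : ContinuousOn f K) :
    (fun p : X × α => f p.1) =O[𝓟 K ×ˢ l] (1 : X × α → ℝ) :=
  (hf.isBigO_principal hK (c := (1 : ℝ)) (by simp)).comp_tendsto tendsto_fst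

lemma isBigO_fst_mul {f : X → ℝ} {g h : X × α → ℝ} (hf : ContinuousOn f K)
    (hg : g =O[𝓟 K ×ˢ l] h) : (fun p => f p.1 * g p) =O[𝓟 K ×ˢ l] h := by
  simpa only [Pi.one_apply, one_mul] using (isBigO_one_fst_of_isCompact hK hf).mul hg

end CompactParameter

section LimitDensity

open Asymptotics
open scoped Real

lemma rhoHat_eq_sqrt_neg_div (y : ℝ) : rhoHat y = √(-y) / π := by
  unfold rhoHat
  split_ifs with hy
  · rfl
  · rw [Real.sqrt_eq_zero_of_nonpos (by linarith), zero_div]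

lemma rhoHat_div_neg (y : ℝ) : rhoHat y / -y = (√(-y))⁻¹ / π := by
  rw [rhoHat_eq_sqrt_neg_div, div_right_comm, Real.sqrt_div_self]

lemma locallyIntegrable_of_intervalIntegrable {E : Type*} [NormedAddCommGroup E] {f : ℝ → E}
    (hf : ∀ a b, IntervalIntegrable f volume a b) : LocallyIntegrable f := fun x =>
  ⟨Ioc (x - 1) (x + 1), Ioc_mem_nhds (by linarith) (by linarith), (hf _ _).1⟩

lemma intervalIntegrable_inv_sqrt (a b : ℝ) :
    IntervalIntegrable (fun y : ℝ => (√y)⁻¹) volume a b := by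
  refine (intervalIntegral.intervalIntegrable_rpow' (r := -(1 / 2)) (by norm_num)).mono_fun
    (by fun_prop : Measurable _).aestronglyMeasurable (.of_forall fun y => ?_)
  rcases le_or_gt 0 y with hy | hy
  · simp only [Real.rpow_neg hy, ← Real.sqrt_eq_rpow, le_refl]
  · simp only [Real.sqrt_eq_zero_of_nonpos hy.le, inv_zero, norm_zero, norm_nonneg]

lemma locallyIntegrable_rhoHat_div_neg : LocallyIntegrable fun y => rhoHat y / -y := by
  simp_rw [rhoHat_div_neg]
  refine locallyIntegrable_of_intervalIntegrable fun a b => .div_const ?_ π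
  rw [IntervalIntegrable.iff_comp_neg]
  simpa only [neg_neg] using intervalIntegrable_inv_sqrt (-a) (-b)

lemma integrableOn_rhoHat_div_neg (a b : ℝ) : IntegrableOn (fun y => rhoHat y / -y) (Ioo a b) :=
  (locallyIntegrable_rhoHat_div_neg.integrableOn_isCompact isCompact_Icc).mono_set
    Ioo_subset_Icc_self

lemma rhoHat_isBigO_one_add_norm_rpow :
    rhoHat =O[cocompact ℝ] fun y => (1 + ‖y‖) ^ (1 / 2 : ℝ) := by
  refine ((sqrt_neg_isBigO_one_add_norm_rpow _).const_mul_left π⁻¹).congr_left fun y => ?_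
  rw [rhoHat_eq_sqrt_neg_div, inv_mul_eq_div]

lemma rho_sub_rhoHat_isBigO :
    (fun y => rho y - rhoHat y) =O[cocompact ℝ] fun y => (1 + ‖y‖) ^ (-1 : ℝ) := by
  have hbot : (fun y => rho y - rhoHat y) =O[atBot] fun y => (1 + ‖y‖) ^ (-1 : ℝ) := by
    simp_rw [rhoHat_eq_sqrt_neg_div]
    exact rho_sub_sqrt_isBigO.trans (inv_isBigO_one_add_norm_rpow.mono atBot_le_cocompact)
  have htop : (fun y => rho y - rhoHat y) =O[atTop] fun y => (1 + ‖y‖) ^ (-1 : ℝ) := by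
    refine (rho_isBigO_exp_neg.trans (exp_neg_isBigO_one_add_norm_rpow _)).congr' ?_ .rfl
    filter_upwards [eventually_ge_atTop 0] with y hy
    rw [rhoHat, if_neg hy.not_gt, sub_zero]
  exact cocompact_eq_atBot_atTop (α := ℝ) ▸ hbot.sup htop

end LimitDensity

section TaylorRemainder

lemma hasDerivAt_comp_add_mul {f : ℝ → ℝ} {f' x h θ : ℝ} (hf : HasDerivAt f f' (x + θ * h)) :
    HasDerivAt (fun θ => f (x + θ * h)) (f' * h) θ := by
  simpa [Function.comp_def] using hf.comp θ (((hasDerivAt_id θ).mul_const h).const_add x)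

lemma sq_mul_integral_one_sub_mul {f f' f'' : ℝ → ℝ} (hf : ∀ x, HasDerivAt f (f' x) x)
    (hf' : ∀ x, HasDerivAt f' (f'' x) x) (hf'' : Continuous f'') (x h : ℝ) :
    h ^ 2 * ∫ θ in (0 : ℝ)..1, (1 - θ) * f'' (x + θ * h) = f (x + h) - f x - h * f' x := by
  have hderiv (θ : ℝ) :
      HasDerivAt (fun θ => (1 - θ) * (h * f' (x + θ * h)) + f (x + θ * h))
        (h ^ 2 * ((1 - θ) * f'' (x + θ * h))) θ := by
    refine ((((hasDerivAt_id θ).const_sub 1).mul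
      ((hasDerivAt_comp_add_mul (hf' _)).const_mul h)).add
      (hasDerivAt_comp_add_mul (hf _))).congr_deriv ?_
    simp only [id]
    ring
  rw [← intervalIntegral.integral_const_mul, intervalIntegral.integral_eq_sub_of_hasDerivAt
    (fun θ _ => hderiv θ) ((by fun_prop : Continuous _).intervalIntegrable _ _)]
  ring_nf

end TaylorRemainder

section PalmIntegrand

/-- The integrand `ρ_x(y) / (x - y)` of the first integral in `u_s(x)`. -/
noncomputable def palmIntegrand (x y : ℝ) : ℝ := (rho y - KAi x y ^ 2 / rho x) / (x - y)

/-- The difference quotient `(ρ(y) - ρ(x)) / (x - y)`, extended continuously to `x = y` by writing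
it as the mean of `-ρ' = Ai²` over the segment from `x` to `y`. -/
noncomputable def rhoSlope (x y : ℝ) : ℝ := ∫ θ in (0 : ℝ)..1, Ai (x + θ * (y - x)) ^ 2

/-- The second derivative in `y` of the numerator `Ai(x) Ai'(y) - Ai'(x) Ai(y)` of `K_Ai`. -/
noncomputable def kernelNumeratorDeriv₂ (x y : ℝ) : ℝ :=
  Ai x * (Ai y + y * deriv Ai y) - deriv Ai x * (y * Ai y)

/-- The difference quotient `(K_Ai(x, y) - ρ(x)) / (x - y)`, extended continuously to `x = y` as the
second Taylor remainder of the numerator of `K_Ai`. -/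
noncomputable def kernelSlope (x y : ℝ) : ℝ :=
  ∫ θ in (0 : ℝ)..1, (1 - θ) * kernelNumeratorDeriv₂ x (x + θ * (y - x))

lemma rho_eq_add_mul_rhoSlope (x y : ℝ) : rho y = rho x + (x - y) * rhoSlope x y := by
  have hAi := continuous_Ai
  have htaylor := intervalIntegral.integral_unitInterval_deriv_eq_sub (f := rho)
    (f' := fun z => -Ai z ^ 2) (z₀ := x) (z₁ := y - x)
    (by fun_prop : Continuous _).continuousOn
    (fun θ _ => isAirySolution_Ai.hasDerivAt_airyEnergy (x + θ • (y - x)))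
  simp only [smul_eq_mul, intervalIntegral.integral_neg, add_sub_cancel] at htaylor
  rw [rhoSlope]
  linarith

lemma KAi_eq_add_mul_kernelSlope (x y : ℝ) : KAi x y = rho x + (x - y) * kernelSlope x y := by
  rcases eq_or_ne x y with rfl | hxy
  · rw [KAi, if_pos rfl, sub_self, zero_mul, add_zero, rho]
  have hAi := continuous_Ai
  have hAi' := isAirySolution_Ai.continuous_deriv
  have hderiv (z : ℝ) := (isAirySolution_Ai.differentiable z).hasDerivAt
  have hderiv₂ := isAirySolution_Ai.hasDerivAt_deriv
  have htaylor := sq_mul_integral_one_sub_mul (f'' := kernelNumeratorDeriv₂ x)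
    (fun z => ((hderiv₂ z).const_mul (Ai x)).sub ((hderiv z).const_mul (deriv Ai x)))
    (fun z => ((((hasDerivAt_id z).mul (hderiv z)).const_mul (Ai x)).sub
      ((hderiv₂ z).const_mul (deriv Ai x))).congr_deriv (by simp [kernelNumeratorDeriv₂]))
    (by unfold kernelNumeratorDeriv₂; fun_prop) x (y - x)
  rw [← kernelSlope, add_sub_cancel] at htaylor
  rw [KAi, if_neg hxy, div_eq_iff (sub_ne_zero.2 hxy), rho]
  simp only [Pi.sub_apply] at htaylor
  linear_combination -htaylor

lemma continuous_rhoSlope : Continuous fun p : ℝ × ℝ => rhoSlope p.1 p.2 := by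
  have hAi := continuous_Ai
  exact intervalIntegral.continuous_parametric_intervalIntegral_of_continuous'
    (f := fun (p : ℝ × ℝ) θ => Ai (p.1 + θ * (p.2 - p.1)) ^ 2) (by fun_prop) 0 1

lemma continuous_kernelSlope : Continuous fun p : ℝ × ℝ => kernelSlope p.1 p.2 := by
  have hAi := continuous_Ai
  have hAi' := isAirySolution_Ai.continuous_deriv
  refine intervalIntegral.continuous_parametric_intervalIntegral_of_continuous'
    (f := fun (p : ℝ × ℝ) θ => (1 - θ) * kernelNumeratorDeriv₂ p.1 (p.1 + θ * (p.2 - p.1))) ?_ 0 1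
  unfold kernelNumeratorDeriv₂
  fun_prop

/-- The extension of `palmIntegrand` across its removable singularity `x = y`. -/
noncomputable def palmIntegrandExtension (x y : ℝ) : ℝ :=
  rhoSlope x y - 2 * kernelSlope x y - (x - y) * kernelSlope x y ^ 2 / rho x

lemma continuous_palmIntegrandExtension :
    Continuous fun p : ℝ × ℝ => palmIntegrandExtension p.1 p.2 := by
  have hrho := continuous_rho
  have hrhoSlope := continuous_rhoSlope
  have hkernelSlope := continuous_kernelSlope
  unfold palmIntegrandExtension
  fun_prop (disch := exact fun p => (rho_pos _).ne')

lemma palmIntegrand_eq_extension {x y : ℝ} (hxy : x ≠ y) :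
    palmIntegrand x y = palmIntegrandExtension x y := by
  have hrho := (rho_pos x).ne'
  have hsub := sub_ne_zero.2 hxy
  rw [palmIntegrand, palmIntegrandExtension, rho_eq_add_mul_rhoSlope x y,
    KAi_eq_add_mul_kernelSlope x y]
  field_simp
  ring

lemma palmIntegrand_ae_eq_extension (x : ℝ) :
    palmIntegrand x =ᵐ[volume] palmIntegrandExtension x := by
  filter_upwards [compl_mem_ae_iff.2 (measure_singleton x)] with y hy
  exact palmIntegrand_eq_extension (Ne.symm hy)

lemma locallyIntegrable_palmIntegrand (x : ℝ) : LocallyIntegrable (palmIntegrand x) :=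
  (continuous_palmIntegrandExtension.comp (.prodMk_right x)).locallyIntegrable.congr
    (palmIntegrand_ae_eq_extension x).symm

lemma integrableOn_palmIntegrand (x a b : ℝ) : IntegrableOn (palmIntegrand x) (Ioo a b) :=
  ((locallyIntegrable_palmIntegrand x).integrableOn_isCompact isCompact_Icc).mono_set
    Ioo_subset_Icc_self

lemma continuous_setIntegral_palmIntegrand {a b : ℝ} (hab : a ≤ b) :
    Continuous fun x => ∫ y in Ioo a b, palmIntegrand x y := by
  have hext (x : ℝ) : ∫ y in Ioo a b, palmIntegrand x y =
      ∫ y in a..b, palmIntegrandExtension x y := by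
    rw [intervalIntegral.integral_of_le hab, integral_Ioc_eq_integral_Ioo]
    exact integral_congr_ae (ae_restrict_of_ae (palmIntegrand_ae_eq_extension x))
  simp_rw [hext]
  exact intervalIntegral.continuous_parametric_intervalIntegral_of_continuous'
    continuous_palmIntegrandExtension a b

end PalmIntegrand

section RegularizedPalmIntegrand

open Asymptotics
open scoped Topology

/-- The difference of the integrands of the two integrals in `u_s(x)`; unlike each of them it is
integrable over the whole line. -/
noncomputable def regularizedPalmIntegrand (x y : ℝ) : ℝ := palmIntegrand x y - rhoHat y / -y

lemma Ai_isBigO_one_add_norm_rpow : Ai =O[cocompact ℝ] fun y => (1 + ‖y‖) ^ (1 / 2 : ℝ) :=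
  isBigO_cocompact_of_sqrt_neg_of_exp_neg isAirySolution_Ai.isBigO_sqrt Ai_isBigO_exp_neg

lemma deriv_Ai_isBigO_one_add_norm_rpow :
    deriv Ai =O[cocompact ℝ] fun y => (1 + ‖y‖) ^ (1 / 2 : ℝ) :=
  isBigO_cocompact_of_sqrt_neg_of_exp_neg isAirySolution_Ai.deriv_isBigO_sqrt
    deriv_Ai_isBigO_exp_neg

lemma regularizedPalmIntegrand_eq {x y : ℝ} (hxy : x ≠ y) (hy : y ≠ 0) :
    regularizedPalmIntegrand x y =
      (rho y - rhoHat y) * (x - y)⁻¹ + rhoHat y * (x * ((x - y)⁻¹ * y⁻¹)) -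
        (rho x)⁻¹ * ((Ai x * deriv Ai y - deriv Ai x * Ai y) * (x - y)⁻¹) ^ 2 * (x - y)⁻¹ := by
  have hrho := (rho_pos x).ne'
  have hsub := sub_ne_zero.2 hxy
  rw [regularizedPalmIntegrand, palmIntegrand, KAi, if_neg hxy]
  field_simp
  ring

section Tail

variable {K : Set ℝ} (hK : IsCompact K)
include hK

lemma inv_sub_isBigO_of_isCompact :
    (fun p : ℝ × ℝ => (p.1 - p.2)⁻¹) =O[𝓟 K ×ˢ cocompact ℝ]
      fun p => (1 + ‖p.2‖) ^ (-1 : ℝ) :=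
  inv_sub_isBigO_one_add_norm_rpow (isBigO_one_fst_of_isCompact hK continuousOn_id) tendsto_snd

lemma kernelNumerator_isBigO :
    (fun p : ℝ × ℝ => Ai p.1 * deriv Ai p.2 - deriv Ai p.1 * Ai p.2) =O[𝓟 K ×ˢ cocompact ℝ]
      fun p => (1 + ‖p.2‖) ^ (1 / 2 : ℝ) :=
  (isBigO_fst_mul hK continuous_Ai.continuousOn
    (deriv_Ai_isBigO_one_add_norm_rpow.comp_tendsto tendsto_snd)).sub
    (isBigO_fst_mul hK isAirySolution_Ai.continuous_deriv.continuousOn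
      (Ai_isBigO_one_add_norm_rpow.comp_tendsto tendsto_snd))

lemma kernelTerm_isBigO :
    (fun p : ℝ × ℝ => (rho p.1)⁻¹ *
      ((Ai p.1 * deriv Ai p.2 - deriv Ai p.1 * Ai p.2) * (p.1 - p.2)⁻¹) ^ 2 * (p.1 - p.2)⁻¹)
      =O[𝓟 K ×ˢ cocompact ℝ] fun p => (1 + ‖p.2‖) ^ (-(3 / 2) : ℝ) := by
  have hinv := inv_sub_isBigO_of_isCompact hK
  have hkernel := isBigO_mul_one_add_norm_rpow (kernelNumerator_isBigO hK) hinv le_rfl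
  have hsq := isBigO_mul_one_add_norm_rpow hkernel hkernel le_rfl
  have hcube := isBigO_mul_one_add_norm_rpow hsq hinv (by norm_num : _ ≤ -(3 / 2 : ℝ))
  simpa only [pow_two, mul_assoc, Pi.inv_apply] using
    isBigO_fst_mul hK (continuous_rho.inv₀ fun x => (rho_pos x).ne').continuousOn hcube

lemma regularizedPalmIntegrand_isBigO :
    (fun p : ℝ × ℝ => regularizedPalmIntegrand p.1 p.2) =O[𝓟 K ×ˢ cocompact ℝ]
      fun p => (1 + ‖p.2‖) ^ (-(3 / 2) : ℝ) := by
  have hinv := inv_sub_isBigO_of_isCompact hK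
  have hsnd := tendsto_snd (f := 𝓟 K) (g := cocompact ℝ)
  have hdensity := isBigO_mul_one_add_norm_rpow (rho_sub_rhoHat_isBigO.comp_tendsto hsnd) hinv
    (by norm_num : _ ≤ -(3 / 2 : ℝ))
  have hkernel := isBigO_mul_one_add_norm_rpow hinv
    (inv_isBigO_one_add_norm_rpow.comp_tendsto hsnd) le_rfl
  have hlimit := isBigO_mul_one_add_norm_rpow (rhoHat_isBigO_one_add_norm_rpow.comp_tendsto hsnd)
    (isBigO_fst_mul hK continuousOn_id hkernel) (by norm_num : _ ≤ -(3 / 2 : ℝ))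
  refine ((hdensity.add hlimit).sub (kernelTerm_isBigO hK)).congr' ?_ .rfl
  filter_upwards [tendsto_fst (mem_principal_self K), hsnd (hK.insert 0).compl_mem_cocompact]
    with p hpK hp
  refine (regularizedPalmIntegrand_eq ?_ ?_).symm
  · exact fun h => hp (.inr (h ▸ hpK))
  · exact fun h => hp (.inl h)

end Tail

lemma integrable_one_add_norm_rpow : Integrable fun y : ℝ => (1 + ‖y‖) ^ (-(3 / 2) : ℝ) :=
  integrable_one_add_norm (by norm_num)

lemma integrable_regularizedPalmIntegrand (x : ℝ) : Integrable (regularizedPalmIntegrand x) := by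
  have htail : regularizedPalmIntegrand x =O[cocompact ℝ] fun y => (1 + ‖y‖) ^ (-(3 / 2) : ℝ) :=
    (regularizedPalmIntegrand_isBigO (isCompact_singleton (x := x))).comp_tendsto
      (k := fun y => (x, y))
      ((tendsto_principal.2 (.of_forall fun _ => mem_singleton x)).prodMk tendsto_id)
  exact ((locallyIntegrable_palmIntegrand x).sub
    locallyIntegrable_rhoHat_div_neg).integrable_of_isBigO_cocompact htail
    (integrable_one_add_norm_rpow.integrableAtFilter _)

lemma setIntegral_regularizedPalmIntegrand (x a b : ℝ) :
    ∫ y in Ioo a b, regularizedPalmIntegrand x y =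
      (∫ y in Ioo a b, palmIntegrand x y) - ∫ y in Ioo a b, rhoHat y / -y :=
  integral_sub (integrableOn_palmIntegrand x a b) (integrableOn_rhoHat_div_neg a b)

lemma tendstoUniformlyOn_setIntegral_regularizedPalmIntegrand {K : Set ℝ} (hK : IsCompact K) :
    TendstoUniformlyOn (fun s x => ∫ y in Ioo (-s) s, regularizedPalmIntegrand x y)
      (fun x => ∫ y, regularizedPalmIntegrand x y) atTop K :=
  tendstoUniformlyOn_setIntegral_Ioo_of_isBigO
    (fun x _ => integrable_regularizedPalmIntegrand x) integrable_one_add_norm_rpow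
    (regularizedPalmIntegrand_isBigO hK)

lemma continuous_integral_regularizedPalmIntegrand :
    Continuous fun x => ∫ y, regularizedPalmIntegrand x y := by
  refine (tendstoLocallyUniformly_iff_forall_isCompact.2 fun K hK =>
    tendstoUniformlyOn_setIntegral_regularizedPalmIntegrand hK).continuous
      (Eventually.frequently ?_)
  filter_upwards [eventually_ge_atTop 0] with s hs
  simp_rw [setIntegral_regularizedPalmIntegrand]
  exact (continuous_setIntegral_palmIntegrand (neg_le_self hs)).sub continuous_const

end RegularizedPalmIntegrand

/-- positivity of `ρ`, integrability of the Palm-correlation integrands, and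
compact-uniform convergence of `u_s` to a continuous limit `u`. -/
theorem palm_correlation_compact_uniform_limit :
    (∀ x : ℝ, 0 < rho x) ∧
    (∀ x s : ℝ, 0 < s →
      IntegrableOn (fun y => (rho y - (KAi x y) ^ 2 / rho x) / (x - y)) (Set.Ioo (-s) s) ∧
      IntegrableOn (fun y => rhoHat y / (-y)) (Set.Ioo (-s) s)) ∧
    ∃ u : ℝ → ℝ, Continuous u ∧
      ∀ K : Set ℝ, IsCompact K →
        TendstoUniformlyOn
          (fun (s : ℝ) (x : ℝ) =>
            (∫ y in Set.Ioo (-s) s, (rho y - (KAi x y) ^ 2 / rho x) / (x - y)) -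
              ∫ y in Set.Ioo (-s) s, rhoHat y / (-y))
          u Filter.atTop K := by
  refine ⟨rho_pos, fun x s _ => ⟨integrableOn_palmIntegrand x _ _,
    integrableOn_rhoHat_div_neg _ _⟩, fun x => ∫ y, regularizedPalmIntegrand x y,
    continuous_integral_regularizedPalmIntegrand, fun K hK => ?_⟩
  refine (tendstoUniformlyOn_setIntegral_regularizedPalmIntegrand hK).congr
    (.of_forall fun s x _ => ?_)
  exact setIntegral_regularizedPalmIntegrand x (-s) s
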